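/- arXiv:1602.01505 — 2 statements merged into one kernel-verified Lean document; each statement's English description precedes it below -/
import Mathlib

section
/- Let d ≥ 1 and m ≥ 1. Let h(z) = P^z( S(τ_{Q(0,m-1)}) ∈ R_m ) be the probability that simple random walk started at z exits the cube Q(0,m-1) through the right-hand face R_m = {m} × [-m,m]^{d-1}. Then h(0) = 1/(2d), and h(z) ≤ h(0) for every z ∈ ([-m+1,0] × [-m+1,m-1]^{d-1}) ∩ Z^d. -/
open MeasureTheory
open scoped ENNReal Classical

namespace USFPaper

/-- Vertices of the nearest-neighbour integer lattice `ℤ^d`. -/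
abbrev V (d : ℕ) := Fin d → ℤ

variable {d : ℕ}

/-- Nearest-neighbour adjacency in `ℤ^d`. -/
def adj (x y : V d) : Prop := (∑ i, |x i - y i|) = 1

/-- The cube `Q(x,r) = { y : ‖x - y‖_∞ ≤ r }`. -/
def cube (x : V d) (r : ℕ) : Set (V d) := { y | ∀ i, |y i - x i| ≤ (r : ℤ) }

/-- Inner boundary `∂ᵢA` of a set `A`. -/
def innerBdry (A : Set (V d)) : Set (V d) := { x | x ∈ A ∧ ∃ y, adj x y ∧ y ∉ A }

/-- Euclidean distance on `ℤ^d`. -/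
noncomputable def eudist (x y : V d) : ℝ := Real.sqrt (∑ i, ((x i : ℝ) - (y i : ℝ)) ^ 2)

/-- The `k`-th coordinate unit vector. -/
def unitVec (k : ℕ) : V d := fun i => if (i : ℕ) = k then 1 else 0

/-- `μ` is the law of simple random walk on `ℤ^d` started at `x`, as a probability
measure on path space: every nearest-neighbour cylinder of length `n` starting at `x`
has probability `(2d)⁻ⁿ`. -/
def IsSRWLaw (μ : Measure (ℕ → V d)) (x : V d) : Prop :=
  IsProbabilityMeasure μ ∧
  ∀ (n : ℕ) (γ : ℕ → V d), γ 0 = x → (∀ i < n, adj (γ i) (γ (i + 1))) →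
    μ { ω | ∀ i ≤ n, ω i = γ i } = (2 * (d : ℝ≥0∞))⁻¹ ^ n

/-- First exit time `τ_A` from `A`, valued in `ℕ∞` (`⊤` if the path never leaves `A`). -/
noncomputable def exitTimeE (A : Set (V d)) (ω : ℕ → V d) : ENat :=
  if h : ∃ j, ω j ∉ A then (Nat.find h : ENat) else ⊤

/-- First hitting time `T_A` of `A`, valued in `ℕ∞`. -/
noncomputable def hitTimeE (A : Set (V d)) (ω : ℕ → V d) : ENat :=
  if h : ∃ j, ω j ∈ A then (Nat.find h : ENat) else ⊤

/-- First positive hitting time `T⁺_A` of `A`, valued in `ℕ∞`. -/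
noncomputable def hitTimePosE (A : Set (V d)) (ω : ℕ → V d) : ENat :=
  if h : ∃ j, 1 ≤ j ∧ ω j ∈ A then (Nat.find h : ENat) else ⊤

/-- First exit time from `A` as a natural number (junk value `0` if the path never exits). -/
noncomputable def exitTime (A : Set (V d)) (ω : ℕ → V d) : ℕ := (exitTimeE A ω).toNat

/-- Index of the first hit of `A` (junk value `0` if `A` is never hit). -/
noncomputable def hitIdx (A : Set (V d)) (γ : ℕ → V d) : ℕ := (hitTimeE A γ).toNat

/-- First index `≥ t` at which the path lies in `A` (junk value `t`). -/
noncomputable def hitIdxFrom (A : Set (V d)) (t : ℕ) (γ : ℕ → V d) : ℕ :=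
  if h : ∃ j, t ≤ j ∧ γ j ∈ A then Nat.find h else t

/-- The path frozen at its first exit from `D`. -/
noncomputable def stopAt (D : Set (V d)) (ω : ℕ → V d) : ℕ → V d :=
  fun j => if (j : ENat) ≤ exitTimeE D ω then ω j else ω (exitTime D ω)

/-- Time of the last visit of the path to the point `ω t`, at or after time `t`
(junk value if there are infinitely many such visits). -/
noncomputable def lastVisit (ω : ℕ → V d) (t : ℕ) : ℕ := sSup { j | t ≤ j ∧ ω j = ω t }

/-- The times of the chronological loop erasure (last-exit decomposition). -/
noncomputable def leTime (ω : ℕ → V d) : ℕ → ℕ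
  | 0 => lastVisit ω 0
  | k + 1 => lastVisit ω (leTime ω k + 1)

/-- Chronological loop erasure of an (infinite, transient) path. -/
noncomputable def infLoopErase (ω : ℕ → V d) : ℕ → V d := fun k => ω (leTime ω k)

/-- The loop erasure `L` of the walk stopped at its first exit from `D`. -/
noncomputable def lerw (D : Set (V d)) (ω : ℕ → V d) : ℕ → V d := infLoopErase (stopAt D ω)

/-- The event `T_A > τ_D`: the walk does not visit `A` at any time up to (and
including) its first exit from `D`; if it never exits `D`, it never visits `A`. -/
def avoidBeforeExit (D A : Set (V d)) (ω : ℕ → V d) : Prop :=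
  ∀ j : ℕ, (j : ENat) ≤ exitTimeE D ω → ω j ∉ A

/-- The event `T⁺_A > τ_D` (visits of `A` at positive times only). -/
def avoidBeforeExitPos (D A : Set (V d)) (ω : ℕ → V d) : Prop :=
  ∀ j : ℕ, 1 ≤ j → (j : ENat) ≤ exitTimeE D ω → ω j ∉ A

/-- The right-hand face (in the first coordinate direction) of the cube `Q(x₀,m)`. -/
def rightFace (x₀ : V d) (m : ℕ) : Set (V d) :=
  { y | y ∈ cube x₀ m ∧ ∀ i : Fin d, (i : ℕ) = 0 → y i = x₀ i + (m : ℤ) }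

/-!
By the Markov property at time `1`, and because a law of simple random walk is determined by its
starting point, the probability of leaving `Q` through `R` is harmonic on `Q`.

Reflecting `z` in the hyperplane at half its `j`-th coordinate replaces that coordinate by `0`. On
the side of this mirror that contains the origin, the maximum principle applied to the reflected
exit probability minus the original one shows that the replacement does not lower the exit
probability, provided the right-hand face contains the mirror image of each of its points beyond the
mirror. This holds for `j ≠ 0`, and also for `j = 0` if `z 0 < 0`. Doing this for every `j` gives
`h(z) ≤ h(0)`.

The sum of the exit probabilities over the `2d` faces is harmonic with boundary values `1`, hence it
is `1` throughout the cube; at the origin all its terms are equal, so `h(0) = 1 / (2d)`.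
-/

open scoped BigOperators

/-- The paths that agree with `γ` up to and including time `n`. -/
def pathCylinder {α : Type*} (γ : ℕ → α) (n : ℕ) : Set (ℕ → α) := {ω | ∀ i ≤ n, ω i = γ i}

/-- The path seen from time `1` on, for the Markov property of the walk at its first step. -/
def shift {α : Type*} (ω : ℕ → α) : ℕ → α := fun i => ω (i + 1)

lemma restrict_preimage_singleton {α : Type*} (γ : ℕ → α) (n : ℕ) :
    (Finset.Iic n).restrict (π := fun _ => α) ⁻¹' {(Finset.Iic n).restrict γ} =
      pathCylinder γ n := by
  ext ω
  simp [pathCylinder, funext_iff]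

section PathSpace

variable {α : Type*} [MeasurableSpace α]

lemma measurable_shift : Measurable (shift : (ℕ → α) → ℕ → α) :=
  measurable_pi_lambda _ fun i => measurable_pi_apply (i + 1)

lemma measurableSet_pathCylinder [MeasurableSingletonClass α] (γ : ℕ → α) (n : ℕ) :
    MeasurableSet (pathCylinder γ n) := by
  rw [← restrict_preimage_singleton]
  exact Finset.measurable_restrict _ (measurableSet_singleton _)

lemma ext_of_pathCylinder [Countable α] [MeasurableSingletonClass α] {μ ν : Measure (ℕ → α)}
    [IsFiniteMeasure μ] [IsFiniteMeasure ν]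
    (h : ∀ n γ, μ (pathCylinder γ n) = ν (pathCylinder γ n)) : μ = ν := by
  have hν : IsProjectiveMeasureFamily fun I : Finset ℕ => ν.map I.restrict := fun I J hJI => by
    rw [Measure.map_map (Finset.measurable_restrict₂ hJI) (Finset.measurable_restrict I),
      Finset.restrict₂_comp_restrict]
  have hlimit : IsProjectiveLimit μ fun I : Finset ℕ => ν.map I.restrict := by
    refine (isProjectiveLimit_nat_iff hν μ).2 fun n => Measure.ext_of_singleton fun x => ?_
    obtain ⟨γ, rfl⟩ : ∃ γ : ℕ → α, (Finset.Iic n).restrict γ = x :=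
      ⟨fun i => if hi : i ≤ n then x ⟨i, Finset.mem_Iic.2 hi⟩ else x ⟨0, by simp⟩, by
        ext i; simp [Finset.mem_Iic.1 i.2]⟩
    rw [Measure.map_apply (Preorder.measurable_frestrictLe n) (measurableSet_singleton _),
      Measure.map_apply (Finset.measurable_restrict _) (measurableSet_singleton _)]
    simpa only [Preorder.frestrictLe, restrict_preimage_singleton] using h n γ
  exact hlimit.unique fun _ => rfl

end PathSpace

lemma adj_iff_exists_single {x y : V d} :
    adj x y ↔ ∃ (i : Fin d) (ε : ℤˣ), y = x + Pi.single i (ε : ℤ) := by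
  constructor
  · intro h
    obtain ⟨i, hi⟩ : ∃ i, x i ≠ y i := by
      by_contra! hxy
      simp [adj, hxy] at h
    have hi_pos : 1 ≤ |x i - y i| := Int.one_le_abs (sub_ne_zero.2 hi)
    have hsplit := Finset.add_sum_erase Finset.univ (fun j => |x j - y j|) (Finset.mem_univ i)
    have hrest_nonneg : ∀ j ∈ Finset.univ.erase i, 0 ≤ |x j - y j| := fun j _ => abs_nonneg _
    have hrest := Finset.sum_nonneg hrest_nonneg
    rw [adj] at h
    have hrest_zero := (Finset.sum_eq_zero_iff_of_nonneg hrest_nonneg).1 (by omega)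
    have hunit : IsUnit (y i - x i) := Int.isUnit_iff_abs_eq.2 (by rw [abs_sub_comm]; omega)
    refine ⟨i, hunit.unit, funext fun j => ?_⟩
    rcases eq_or_ne j i with rfl | hj
    · simp
    · have := hrest_zero j (by simp [hj])
      simp only [abs_eq_zero, sub_eq_zero] at this
      simp [hj, this]
  · rintro ⟨i, ε, rfl⟩
    simp [adj, Pi.single_apply, apply_ite abs, Int.isUnit_iff_abs_eq.1 ε.isUnit]

lemma add_single_injective (z : V d) :
    Function.Injective fun s : Fin d × ℤˣ => z + Pi.single s.1 (s.2 : ℤ) := by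
  rintro ⟨i, ε⟩ ⟨j, δ⟩ h
  have hi := congrFun (add_left_cancel h) i
  rcases eq_or_ne i j with rfl | hij
  · simpa [Units.ext_iff] using hi
  · simp [hij] at hi

/-- The `2d` nearest neighbours of `z` in `ℤ^d`, as a finite set to average over. -/
noncomputable def neighbors (z : V d) : Finset (V d) :=
  Finset.univ.map ⟨fun s : Fin d × ℤˣ => z + Pi.single s.1 (s.2 : ℤ), add_single_injective z⟩

lemma mem_neighbors {z y : V d} : y ∈ neighbors z ↔ adj z y := by
  simp [neighbors, adj_iff_exists_single, eq_comm]

lemma card_neighbors (z : V d) : (neighbors z).card = 2 * d := by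
  simp [neighbors, mul_comm]

lemma neighbors_nonempty [NeZero d] (z : V d) : (neighbors z).Nonempty := by
  rw [← Finset.card_pos, card_neighbors]
  exact Nat.mul_pos two_pos (NeZero.pos d)

/-- Discrete harmonicity of `u` on `D`: at each point of `D` the value of `u` is its mean over the
nearest neighbours, which need not lie in `D`. -/
def HarmonicOn (u : V d → ℝ) (D : Set (V d)) : Prop :=
  ∀ z ∈ D, u z = 𝔼 y ∈ neighbors z, u y

lemma HarmonicOn.sub {u v : V d → ℝ} {D : Set (V d)} (hu : HarmonicOn u D)
    (hv : HarmonicOn v D) : HarmonicOn (fun z => u z - v z) D := fun z hz => by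
  simp only [Finset.expect_sub_distrib, ← hu z hz, ← hv z hz]

lemma harmonicOn_sum {ι : Type*} {s : Finset ι} {u : ι → V d → ℝ} {D : Set (V d)}
    (hu : ∀ i ∈ s, HarmonicOn (u i) D) : HarmonicOn (fun z => ∑ i ∈ s, u i z) D := fun z hz => by
  rw [Finset.expect_sum_comm]
  exact Finset.sum_congr rfl fun i hi => hu i hi z hz

lemma harmonicOn_const [NeZero d] (c : ℝ) (D : Set (V d)) : HarmonicOn (fun _ => c) D :=
  fun z _ => (Finset.expect_const (neighbors_nonempty z) c).symm

lemma HarmonicOn.comp {u : V d → ℝ} {D : Set (V d)} (hu : HarmonicOn u D) (σ : V d ≃ V d)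
    (hσ : ∀ x y, adj (σ x) (σ y) ↔ adj x y) : HarmonicOn (u ∘ σ) (σ ⁻¹' D) := fun z hz =>
  (hu (σ z) hz).trans <| Eq.symm <|
    Finset.expect_equiv σ (fun y => by simp only [mem_neighbors, hσ]) fun _ _ => rfl

/-- Where `v` attains a positive maximum over `D`, the point with the largest coordinate in a fixed
direction has a neighbour with a strictly smaller value, contradicting the mean value property. -/
lemma nonpos_of_le_expect_neighbors [NeZero d] {D : Set (V d)} (hD : D.Finite) {v : V d → ℝ}
    (hmean : ∀ z ∈ D, 0 < v z → v z ≤ 𝔼 y ∈ neighbors z, v y)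
    (hbdry : ∀ z ∈ D, 0 < v z → ∀ y, adj z y → y ∉ D → v y ≤ 0) :
    ∀ z ∈ D, v z ≤ 0 := by
  intro z hz
  obtain ⟨x, hxD, hx⟩ := Set.exists_max_image D (fun y => toLex (v y, y 0)) hD ⟨z, hz⟩
  simp only [Prod.Lex.toLex_le_toLex'] at hx
  refine (hx z hz).1.trans (not_lt.1 fun hpos => ?_)
  have hle : ∀ y ∈ neighbors x, v y ≤ v x := fun y hy => by
    by_cases hyD : y ∈ D
    · exact (hx y hyD).1
    · exact (hbdry x hxD hpos y (mem_neighbors.1 hy) hyD).trans hpos.le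
  have hadj : adj x (x + Pi.single 0 1) := adj_iff_exists_single.2 ⟨0, 1, rfl⟩
  have hlt : v (x + Pi.single 0 1) < v x := by
    by_cases hyD : x + Pi.single 0 1 ∈ D
    · refine (hx _ hyD).1.lt_of_ne fun heq => ?_
      simpa using (hx _ hyD).2 heq
    · exact (hbdry x hxD hpos _ hadj hyD).trans_lt hpos
  exact (hmean x hxD hpos).not_gt (Finset.expect_lt hle ⟨_, mem_neighbors.2 hadj, hlt⟩)

lemma HarmonicOn.le_of_le_boundary [NeZero d] {D : Set (V d)} (hD : D.Finite) {u v : V d → ℝ}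
    (hu : HarmonicOn u D) (hv : HarmonicOn v D)
    (hbdry : ∀ z ∈ D, ∀ y, adj z y → y ∉ D → u y ≤ v y) {z : V d} (hz : z ∈ D) : u z ≤ v z :=
  sub_nonpos.1 <| nonpos_of_le_expect_neighbors hD (v := fun y => u y - v y)
    (fun y hy _ => (hu.sub hv y hy).le)
    (fun y hy _ x hxy hx => sub_nonpos.2 (hbdry y hy x hxy hx)) z hz

lemma HarmonicOn.eqOn_of_eq_boundary [NeZero d] {D : Set (V d)} (hD : D.Finite) {u v : V d → ℝ}
    (hu : HarmonicOn u D) (hv : HarmonicOn v D)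
    (hbdry : ∀ z ∈ D, ∀ y, adj z y → y ∉ D → u y = v y) : Set.EqOn u v D := fun _ hz =>
  le_antisymm (hu.le_of_le_boundary hD hv (fun x hx y hxy hy => (hbdry x hx y hxy hy).le) hz)
    (hv.le_of_le_boundary hD hu (fun x hx y hxy hy => (hbdry x hx y hxy hy).ge) hz)

section WalkLaw

variable {μ ν : Measure (ℕ → V d)} {z y : V d}

lemma IsSRWLaw.ae_zero_eq (hμ : IsSRWLaw μ z) : ∀ᵐ ω ∂μ, ω 0 = z := by
  have := hμ.1
  have h : μ (pathCylinder (fun _ => z) 0) = 1 := by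
    simpa [pathCylinder] using hμ.2 0 (fun _ => z) rfl (by simp)
  filter_upwards [(mem_ae_iff_prob_eq_one (measurableSet_pathCylinder _ _)).2 h] with ω hω
  exact hω 0 le_rfl

lemma IsSRWLaw.pathCylinder_succ_ae_eq (hμ : IsSRWLaw μ z) {γ : ℕ → V d} (hγ : γ 0 = z) (n : ℕ) :
    pathCylinder γ (n + 1) =ᵐ[μ] (shift ⁻¹' pathCylinder (shift γ) n : Set (ℕ → V d)) := by
  filter_upwards [hμ.ae_zero_eq] with ω hω
  refine propext ⟨fun h i hi => h (i + 1) (by omega), fun h i hi => ?_⟩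
  cases i with
  | zero => rw [hω, hγ]
  | succ i => exact h i (by omega)

lemma IsSRWLaw.measure_shift_preimage_pathCylinder (hμ : IsSRWLaw μ z) {γ : ℕ → V d} {n : ℕ}
    (hz : adj z (γ 0)) (hγ : ∀ i < n, adj (γ i) (γ (i + 1))) :
    μ (shift ⁻¹' pathCylinder γ n) = (2 * (d : ℝ≥0∞))⁻¹ ^ (n + 1) := by
  let γ' : ℕ → V d := fun i => Nat.casesOn i z γ
  rw [← hμ.2 (n + 1) γ' rfl fun i hi => by
    cases i with
    | zero => exact hz
    | succ i => exact hγ i (by omega)]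
  exact (measure_congr (hμ.pathCylinder_succ_ae_eq (γ := γ') rfl n)).symm

lemma IsSRWLaw.measure_one_eq (hμ : IsSRWLaw μ z) (hy : adj z y) :
    μ {ω | ω 1 = y} = (2 * (d : ℝ≥0∞))⁻¹ := by
  simpa [pathCylinder, shift] using
    hμ.measure_shift_preimage_pathCylinder (γ := fun _ => y) (n := 0) hy (by simp)

lemma measurableSet_one_eq (y : V d) : MeasurableSet {ω : ℕ → V d | ω 1 = y} :=
  measurableSet_eq_fun (measurable_pi_apply 1) measurable_const

lemma IsSRWLaw.ae_one_mem_neighbors [NeZero d] (hμ : IsSRWLaw μ z) :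
    ∀ᵐ ω ∂μ, ω 1 ∈ neighbors z := by
  have := hμ.1
  have hd : (2 * (d : ℝ≥0∞)) ≠ 0 := by simp [NeZero.ne d]
  have hfibre : ∀ y ∈ neighbors z, μ ((fun ω => ω 1) ⁻¹' {y}) = (2 * (d : ℝ≥0∞))⁻¹ := fun y hy =>
    hμ.measure_one_eq (mem_neighbors.1 hy)
  have hprob : μ ((fun ω => ω 1) ⁻¹' (neighbors z : Set (V d))) = 1 := by
    rw [← sum_measure_preimage_singleton _ fun y _ => measurableSet_one_eq y,
      Finset.sum_congr rfl hfibre, Finset.sum_const, card_neighbors, nsmul_eq_mul,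
      Nat.cast_mul, Nat.cast_two, ENNReal.mul_inv_cancel hd (by finiteness)]
  exact (mem_ae_iff_prob_eq_one (measurable_pi_apply 1 (Finset.measurableSet _))).2 hprob

/-- The law of the path seen from time `1` on, given that the first step leads to `y`. -/
noncomputable def nextLaw (μ : Measure (ℕ → V d)) (y : V d) : Measure (ℕ → V d) :=
  (ProbabilityTheory.cond μ {ω | ω 1 = y}).map shift

lemma IsSRWLaw.nextLaw_apply (hμ : IsSRWLaw μ z) (hy : adj z y) {A : Set (ℕ → V d)}
    (hA : MeasurableSet A) :
    nextLaw μ y A = 2 * d * μ ({ω | ω 1 = y} ∩ shift ⁻¹' A) := by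
  rw [nextLaw, Measure.map_apply measurable_shift hA,
    ProbabilityTheory.cond_apply (measurableSet_one_eq y), hμ.measure_one_eq hy, inv_inv]

lemma IsSRWLaw.isSRWLaw_nextLaw [NeZero d] (hμ : IsSRWLaw μ z) (hy : adj z y) :
    IsSRWLaw (nextLaw μ y) y := by
  have := hμ.1
  have hd : (2 * (d : ℝ≥0∞)) ≠ 0 := by simp [NeZero.ne d]
  refine ⟨?_, fun n γ hγy hγ => ?_⟩
  · have hpos : μ {ω | ω 1 = y} ≠ 0 := by
      rw [hμ.measure_one_eq hy]
      exact ENNReal.inv_ne_zero.2 (by finiteness)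
    have := ProbabilityTheory.cond_isProbabilityMeasure hpos
    exact Measure.isProbabilityMeasure_map measurable_shift.aemeasurable
  · have hsub : shift ⁻¹' pathCylinder γ n ⊆ {ω | ω 1 = y} := fun ω hω =>
      (hω 0 n.zero_le).trans hγy
    change nextLaw μ y (pathCylinder γ n) = _
    rw [hμ.nextLaw_apply hy (measurableSet_pathCylinder γ n), Set.inter_eq_right.2 hsub,
      hμ.measure_shift_preimage_pathCylinder (hγy ▸ hy) hγ, pow_succ', ← mul_assoc,
      ENNReal.mul_inv_cancel hd (by finiteness), one_mul]

lemma IsSRWLaw.measureReal_shift_preimage [NeZero d] (hμ : IsSRWLaw μ z) {A : Set (ℕ → V d)}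
    (hA : MeasurableSet A) :
    μ.real (shift ⁻¹' A) = 𝔼 y ∈ neighbors z, (nextLaw μ y).real A := by
  have := hμ.1
  have hd : (d : ℝ) ≠ 0 := Nat.cast_ne_zero.2 (NeZero.ne d)
  have hfibre : ∀ y ∈ neighbors z,
      (nextLaw μ y).real A = 2 * d * μ.real ({ω | ω 1 = y} ∩ shift ⁻¹' A) := fun y hy => by
    simp [Measure.real, hμ.nextLaw_apply (mem_neighbors.1 hy) hA]
  have hsplit : μ.real (shift ⁻¹' A) =
      ∑ y ∈ neighbors z, μ.real ({ω | ω 1 = y} ∩ shift ⁻¹' A) := by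
    rw [← measureReal_biUnion_finset
      (fun x _ y _ hxy => Set.disjoint_left.2 fun ω hx hy => hxy (hx.1.symm.trans hy.1))
      fun y _ => (measurableSet_one_eq y).inter (measurable_shift hA)]
    refine measureReal_congr ?_
    filter_upwards [hμ.ae_one_mem_neighbors] with ω hω
    refine propext ⟨fun h => Set.mem_biUnion hω ⟨rfl, h⟩, fun h => ?_⟩
    obtain ⟨y, -, -, h⟩ := Set.mem_iUnion₂.1 h
    exact h
  rw [Finset.expect_eq_sum_div_card, Finset.sum_congr rfl hfibre, ← Finset.mul_sum, ← hsplit,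
    card_neighbors]
  push_cast
  field_simp

lemma IsSRWLaw.measureReal_pathCylinder_of_ne (hμ : IsSRWLaw μ z) {γ : ℕ → V d} (hγ : γ 0 ≠ z)
    (n : ℕ) : μ.real (pathCylinder γ n) = 0 := by
  rw [measureReal_def, measure_mono_null (fun ω hω => ?_) (ae_iff.1 hμ.ae_zero_eq),
    ENNReal.toReal_zero]
  exact fun hz => hγ ((hω 0 n.zero_le).symm.trans hz)

lemma IsSRWLaw.measureReal_pathCylinder_eq [NeZero d] (hμ : IsSRWLaw μ z) (hν : IsSRWLaw ν z)
    (γ : ℕ → V d) (n : ℕ) : μ.real (pathCylinder γ n) = ν.real (pathCylinder γ n) := by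
  induction n generalizing μ ν z γ with
  | zero =>
    by_cases hγ : γ 0 = z
    · exact congrArg ENNReal.toReal
        ((hμ.2 0 γ hγ (by simp)).trans (hν.2 0 γ hγ (by simp)).symm)
    · rw [hμ.measureReal_pathCylinder_of_ne hγ, hν.measureReal_pathCylinder_of_ne hγ]
  | succ n ih =>
    by_cases hγ : γ 0 = z
    · rw [measureReal_congr (hμ.pathCylinder_succ_ae_eq hγ n),
        measureReal_congr (hν.pathCylinder_succ_ae_eq hγ n),
        hμ.measureReal_shift_preimage (measurableSet_pathCylinder _ n),
        hν.measureReal_shift_preimage (measurableSet_pathCylinder _ n)]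
      exact Finset.expect_congr rfl fun y hy => ih (hμ.isSRWLaw_nextLaw (mem_neighbors.1 hy))
        (hν.isSRWLaw_nextLaw (mem_neighbors.1 hy)) _
    · rw [hμ.measureReal_pathCylinder_of_ne hγ, hν.measureReal_pathCylinder_of_ne hγ]

lemma IsSRWLaw.unique [NeZero d] (hμ : IsSRWLaw μ z) (hν : IsSRWLaw ν z) : μ = ν := by
  have := hμ.1
  have := hν.1
  exact ext_of_pathCylinder fun n γ =>
    (measureReal_eq_measureReal_iff).1 (hμ.measureReal_pathCylinder_eq hν γ n)

lemma IsSRWLaw.map_add_right (hμ : IsSRWLaw μ z) (w : V d) :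
    IsSRWLaw (μ.map fun ω i => ω i + w) (z + w) := by
  have := hμ.1
  have hmeas : Measurable fun (ω : ℕ → V d) i => ω i + w := by fun_prop
  refine ⟨Measure.isProbabilityMeasure_map hmeas.aemeasurable, fun n γ hγz hγ => ?_⟩
  change μ.map _ (pathCylinder γ n) = _
  rw [Measure.map_apply hmeas (measurableSet_pathCylinder γ n),
    ← hμ.2 n (fun i => γ i - w) (by simp [hγz]) (by simpa [adj] using hγ)]
  simp only [pathCylinder, Set.preimage_ofPred_eq, eq_sub_iff_add_eq]

lemma IsSRWLaw.exists_family (hμ : IsSRWLaw μ z) :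
    ∃ P : V d → Measure (ℕ → V d), ∀ w, IsSRWLaw (P w) w :=
  ⟨fun w => μ.map fun ω i => ω i + (w - z), fun w => by
    simpa using hμ.map_add_right (w - z)⟩

end WalkLaw

/-- The event that the path leaves `Q` through `R`. A path that never leaves `Q` has the junk exit
time `0`, so it does not belong to this event when `Q` and `R` are disjoint. -/
def exitEvent (Q R : Set (V d)) : Set (ℕ → V d) := {ω | ω (exitTime Q ω) ∈ R}

section ExitEvent

variable {Q R : Set (V d)} {ω : ℕ → V d}

lemma mem_exitEvent_iff_of_notMem (hω : ω 0 ∉ Q) : ω ∈ exitEvent Q R ↔ ω 0 ∈ R := by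
  have hexit : ∃ j, ω j ∉ Q := ⟨0, hω⟩
  have hfind : Nat.find hexit = 0 := (Nat.find_eq_zero hexit).2 hω
  simp [exitEvent, exitTime, exitTimeE, hexit, hfind]

lemma mem_exitEvent_iff (hQR : Disjoint Q R) :
    ω ∈ exitEvent Q R ↔ ∃ n, (∀ i < n, ω i ∈ Q) ∧ ω n ∈ R := by
  by_cases hexit : ∃ j, ω j ∉ Q
  · have htime : exitTime Q ω = Nat.find hexit := by simp [exitTime, exitTimeE, hexit]
    rw [exitEvent, Set.mem_ofPred_eq, htime]
    refine ⟨fun h => ⟨_, fun i hi => not_not.1 (Nat.find_min hexit hi), h⟩, ?_⟩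
    rintro ⟨n, hn, hnR⟩
    rwa [(Nat.find_eq_iff hexit).2
      ⟨Set.disjoint_right.1 hQR hnR, fun i hi => not_not.2 (hn i hi)⟩]
  · push Not at hexit
    exact iff_of_false (Set.disjoint_left.1 hQR (hexit _)) fun ⟨n, _, hnR⟩ =>
      Set.disjoint_left.1 hQR (hexit n) hnR

lemma measurableSet_exitEvent (hQR : Disjoint Q R) : MeasurableSet (exitEvent Q R) := by
  have hunion : exitEvent Q R =
      ⋃ n, (⋂ i < n, (fun ω => ω i) ⁻¹' Q) ∩ (fun ω => ω n) ⁻¹' R := by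
    ext ω
    simp [mem_exitEvent_iff hQR]
  rw [hunion]
  exact .iUnion fun n => .inter (.iInter fun i => .iInter fun _ =>
    measurable_pi_apply i (.of_discrete)) (measurable_pi_apply n (.of_discrete))

lemma shift_mem_exitEvent_iff (hQR : Disjoint Q R) (hω : ω 0 ∈ Q) :
    shift ω ∈ exitEvent Q R ↔ ω ∈ exitEvent Q R := by
  rw [mem_exitEvent_iff hQR, mem_exitEvent_iff hQR,
    ← Nat.or_exists_add_one (p := fun n => (∀ i < n, ω i ∈ Q) ∧ ω n ∈ R)]
  simp [-Order.lt_add_one_iff, Nat.forall_lt_succ_left', hω, Set.disjoint_left.1 hQR hω, shift]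

end ExitEvent

/-- The probability `P^z(S(τ_Q) ∈ R)` that the walk started at `z` leaves `Q` through `R`, where
`P z` stands for `P^z`. -/
noncomputable def exitProb (P : V d → Measure (ℕ → V d)) (Q R : Set (V d)) (z : V d) : ℝ :=
  (P z).real (exitEvent Q R)

section ExitProb

variable {P : V d → Measure (ℕ → V d)} {Q R : Set (V d)} {z : V d}

lemma exitProb_nonneg : 0 ≤ exitProb P Q R z := measureReal_nonneg

lemma exitProb_of_notMem (hP : ∀ z, IsSRWLaw (P z) z) (hz : z ∉ Q) :
    exitProb P Q R z = R.indicator 1 z := by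
  have := (hP z).1
  by_cases hzR : z ∈ R
  · have hae : exitEvent Q R =ᵐ[P z] Set.univ := by
      filter_upwards [(hP z).ae_zero_eq] with ω hω
      subst hω
      exact propext ⟨fun _ => trivial, fun _ => (mem_exitEvent_iff_of_notMem hz).2 hzR⟩
    simp [exitProb, measureReal_congr hae, hzR]
  · have hae : exitEvent Q R =ᵐ[P z] (∅ : Set (ℕ → V d)) := by
      filter_upwards [(hP z).ae_zero_eq] with ω hω
      subst hω
      exact propext ⟨fun h => hzR ((mem_exitEvent_iff_of_notMem hz).1 h), fun h => h.elim⟩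
    simp [exitProb, measureReal_congr hae, hzR]

lemma harmonicOn_exitProb [NeZero d] (hP : ∀ z, IsSRWLaw (P z) z) (hQR : Disjoint Q R) :
    HarmonicOn (exitProb P Q R) Q := by
  intro z hz
  have hshift : exitEvent Q R =ᵐ[P z] (shift ⁻¹' exitEvent Q R : Set (ℕ → V d)) := by
    filter_upwards [(hP z).ae_zero_eq] with ω hω
    subst hω
    exact propext (shift_mem_exitEvent_iff hQR hz).symm
  rw [exitProb, measureReal_congr hshift,
    (hP z).measureReal_shift_preimage (measurableSet_exitEvent hQR)]
  refine Finset.expect_congr rfl fun y hy => ?_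
  rw [((hP z).isSRWLaw_nextLaw (mem_neighbors.1 hy)).unique (hP y), exitProb]

end ExitProb

section Polarization

variable {j : Fin d} {c : ℤ}

/-- The reflection of `ℤ^d` in the hyperplane `z j = c / 2`; it preserves the lattice for odd `c`
as well. -/
def reflect (j : Fin d) (c : ℤ) : V d ≃ V d :=
  Function.Involutive.toPerm (fun z => Function.update z j (c - z j)) fun z => by simp

@[simp] lemma reflect_apply (z : V d) :
    reflect j c z = Function.update z j (c - z j) := rfl

lemma reflect_reflect (z : V d) : reflect j c (reflect j c z) = z := by simp

lemma adj_reflect_iff {x y : V d} : adj (reflect j c x) (reflect j c y) ↔ adj x y := by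
  refine Eq.congr_left (Finset.sum_congr rfl fun i _ => ?_)
  rcases eq_or_ne i j with rfl | hi
  · simp [abs_sub_comm]
  · simp [hi]

/-- The set `A` is at least as large on the side of the mirror `z j = c / 2` that contains the
origin as on the other side: it contains the mirror image of each of its points on the far side.
The sides are told apart by comparing `|z j|` with `|c - z j|`. -/
def IsPolarized (j : Fin d) (c : ℤ) (A : Set (V d)) : Prop :=
  ∀ ⦃z⦄, |z j| ≤ |c - z j| → reflect j c z ∈ A → z ∈ A

lemma reflect_eq_self_or_eq_of_adj {x y : V d} (hxy : adj x y) (hx : |x j| ≤ |c - x j|)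
    (hy : |c - y j| < |y j|) : reflect j c x = x ∨ reflect j c x = y := by
  obtain ⟨i, ε, rfl⟩ := adj_iff_exists_single.1 hxy
  rcases eq_or_ne j i with rfl | hij
  · suffices hc : c - x j = x j ∨ c - x j = x j + (ε : ℤ) from
      hc.imp (fun h => by simp [h]) fun h => by
        ext l
        rcases eq_or_ne l j with rfl | hl <;> simp [*]
    simp only [Pi.add_apply, Pi.single_eq_same] at hy
    have hε : |(ε : ℤ)| = 1 := Int.isUnit_iff_abs_eq.1 ε.isUnit
    grind
  · simp only [Pi.add_apply, Pi.single_eq_of_ne hij, add_zero] at hy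
    exact absurd hy hx.not_gt

variable {P : V d → Measure (ℕ → V d)} {Q R : Set (V d)} {z : V d}

lemma exitProb_reflect_le_of_notMem (hP : ∀ z, IsSRWLaw (P z) z) (hQ : IsPolarized j c Q)
    (hR : IsPolarized j c R) (hz : |z j| ≤ |c - z j|) (hzQ : z ∉ Q) :
    exitProb P Q R (reflect j c z) ≤ exitProb P Q R z := by
  rw [exitProb_of_notMem hP hzQ, exitProb_of_notMem hP (mt (hQ hz) hzQ)]
  by_cases hzR : reflect j c z ∈ R
  · rw [Set.indicator_of_mem hzR, Set.indicator_of_mem (hR hz hzR), Pi.one_apply, Pi.one_apply]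
  · rw [Set.indicator_of_notMem hzR]
    exact Set.indicator_apply_nonneg fun _ => zero_le_one

lemma reflect_mem_of_exitProb_lt (hP : ∀ z, IsSRWLaw (P z) z) (hQR : Disjoint Q R)
    (hR : IsPolarized j c R) (hz : |z j| ≤ |c - z j|) (hzQ : z ∈ Q)
    (hlt : exitProb P Q R z < exitProb P Q R (reflect j c z)) : reflect j c z ∈ Q := by
  by_contra hσQ
  have hσR : reflect j c z ∉ R := fun h => Set.disjoint_left.1 hQR hzQ (hR hz h)
  rw [exitProb_of_notMem hP hσQ, Set.indicator_of_notMem hσR] at hlt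
  exact hlt.not_ge exitProb_nonneg

lemma exitProb_reflect_le [NeZero d] (hP : ∀ z, IsSRWLaw (P z) z) (hQfin : Q.Finite)
    (hQR : Disjoint Q R) (hQ : IsPolarized j c Q) (hR : IsPolarized j c R)
    (hz : |z j| ≤ |c - z j|) : exitProb P Q R (reflect j c z) ≤ exitProb P Q R z := by
  by_cases hzQ : z ∈ Q
  · have harm := harmonicOn_exitProb hP hQR
    have hmax := nonpos_of_le_expect_neighbors (D := {x ∈ Q | |x j| ≤ |c - x j|})
      (hQfin.subset (Set.sep_subset _ _))
      (v := fun x => exitProb P Q R (reflect j c x) - exitProb P Q R x)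
    refine sub_nonpos.1 (hmax ?mean ?boundary z ⟨hzQ, hz⟩)
    case mean =>
      rintro x ⟨hxQ, hx⟩ hpos
      have hσx := reflect_mem_of_exitProb_lt hP hQR hR hx hxQ (sub_pos.1 hpos)
      have hcomp := harm.comp (reflect j c) (fun _ _ => adj_reflect_iff) x hσx
      rw [Finset.expect_sub_distrib, ← harm x hxQ]
      exact (sub_left_inj.2 hcomp).le
    case boundary =>
      rintro x ⟨_, hx⟩ hpos y hxy hyD
      rcases le_or_gt |y j| |c - y j| with hy | hy
      · exact sub_nonpos.2 (exitProb_reflect_le_of_notMem hP hQ hR hy fun hyQ => hyD ⟨hyQ, hy⟩)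
      · rcases reflect_eq_self_or_eq_of_adj hxy hx hy with hσ | rfl
        · simp only [hσ, sub_self, lt_self_iff_false] at hpos
        · rw [reflect_reflect]
          linarith
  · exact exitProb_reflect_le_of_notMem hP hQ hR hz hzQ

end Polarization

section Cube

variable {j : Fin d} {δ : ℤˣ} {c : ℤ} {z : V d} {k m : ℕ}

lemma mem_cube_zero : z ∈ cube 0 m ↔ ∀ i, |z i| ≤ (m : ℤ) := by
  simp [cube]

lemma finite_cube (x : V d) (m : ℕ) : (cube x m).Finite :=
  (Set.finite_Icc (fun i => x i - (m : ℤ)) (fun i => x i + m)).subset fun _ hy =>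
    ⟨fun i => sub_le_comm.1 (abs_sub_le_iff.1 (hy i)).2,
      fun i => sub_le_iff_le_add'.1 (abs_sub_le_iff.1 (hy i)).1⟩

lemma add_single_mem_cube (hz : z ∈ cube 0 k) : z + Pi.single j (δ : ℤ) ∈ cube 0 (k + 1) := by
  refine mem_cube_zero.2 fun l => ?_
  have hl := mem_cube_zero.1 hz l
  have hδ : |(δ : ℤ)| = 1 := Int.isUnit_iff_abs_eq.1 δ.isUnit
  rcases eq_or_ne l j with rfl | hlj
  · simpa [hδ] using (abs_add_le (z l) δ).trans (add_le_add_left hl _)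
  · simpa [hlj] using hl.trans (by simp)

lemma mul_coord_eq_of_add_single_notMem_cube (hz : z ∈ cube 0 k)
    (hy : z + Pi.single j (δ : ℤ) ∉ cube 0 k) : δ * (z j + δ) = k + 1 := by
  have hj := mem_cube_zero.1 hz j
  have hy_lt : (k : ℤ) < |z j + δ| := by
    refine not_le.1 fun hle => hy (mem_cube_zero.2 fun l => ?_)
    rcases eq_or_ne l j with rfl | hlj
    · simpa using hle
    · simpa [hlj] using mem_cube_zero.1 hz l
  rcases Int.isUnit_iff.1 δ.isUnit with hδ | hδ <;> rw [hδ] at hy_lt ⊢ <;> grind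

lemma mem_rightFace_zero [NeZero d] : z ∈ rightFace 0 m ↔ z ∈ cube 0 m ∧ z 0 = m := by
  simp [rightFace, Fin.val_eq_zero_iff]

lemma disjoint_cube_rightFace [NeZero d] : Disjoint (cube (0 : V d) k) (rightFace 0 (k + 1)) :=
  Set.disjoint_left.2 fun z hz hzR => by
    have h0 := mem_cube_zero.1 hz 0
    rw [(mem_rightFace_zero.1 hzR).2] at h0
    grind

lemma isPolarized_cube (j : Fin d) (c : ℤ) (m : ℕ) : IsPolarized j c (cube 0 m) := by
  intro z hz hσ
  refine mem_cube_zero.2 fun i => ?_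
  have hi := mem_cube_zero.1 hσ i
  rcases eq_or_ne i j with rfl | hij
  · exact hz.trans (by simpa using hi)
  · simpa [hij] using hi

lemma isPolarized_rightFace [NeZero d] (hc : j = 0 → c < 0) (m : ℕ) :
    IsPolarized j c (rightFace 0 m) := by
  intro z hz hσ
  obtain ⟨hcube, hface⟩ := mem_rightFace_zero.1 hσ
  refine mem_rightFace_zero.2 ⟨isPolarized_cube j c m hz hcube, ?_⟩
  rcases eq_or_ne j 0 with rfl | hj
  · have := hc rfl
    simp only [reflect_apply, Function.update_self] at hface
    grind
  · simpa [hj.symm] using hface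

end Cube

section SignedSwap

variable [NeZero d] {i j : Fin d} {ε δ : ℤˣ} {z x y : V d} {k m : ℕ}

/-- The symmetry of `ℤ^d` that exchanges the coordinates `0` and `i` and multiplies all coordinates
by the sign `ε`. It carries the face `ε * z i = m` of the cube `Q(0, m)` to the right-hand face. -/
def signedSwap (i : Fin d) (ε : ℤˣ) : V d ≃ V d :=
  Function.Involutive.toPerm (fun z l => ε * z (Equiv.swap 0 i l)) fun z => by
    ext l
    simp [← mul_assoc, ← Units.val_mul]

lemma signedSwap_apply (z : V d) (l : Fin d) :
    signedSwap i ε z l = ε * z (Equiv.swap 0 i l) := rfl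

lemma abs_signedSwap_apply (z : V d) (l : Fin d) :
    |signedSwap i ε z l| = |z (Equiv.swap 0 i l)| := by
  rw [signedSwap_apply, abs_mul, Int.isUnit_iff_abs_eq.1 ε.isUnit, one_mul]

lemma adj_signedSwap_iff : adj (signedSwap i ε x) (signedSwap i ε y) ↔ adj x y := by
  refine Eq.congr_left ?_
  simp only [signedSwap_apply, ← mul_sub, abs_mul, Int.isUnit_iff_abs_eq.1 ε.isUnit, one_mul]
  exact Equiv.sum_comp (Equiv.swap 0 i) fun l => |x l - y l|

lemma signedSwap_mem_cube_iff : signedSwap i ε z ∈ cube 0 m ↔ z ∈ cube 0 m := by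
  simp only [mem_cube_zero, abs_signedSwap_apply]
  exact (Equiv.swap 0 i).forall_congr_right (q := fun l => |z l| ≤ (m : ℤ))

lemma preimage_signedSwap_cube :
    (signedSwap i ε ⁻¹' cube 0 m : Set (V d)) = cube 0 m :=
  Set.ext fun _ => signedSwap_mem_cube_iff

lemma signedSwap_mem_rightFace_iff :
    signedSwap i ε z ∈ rightFace 0 m ↔ z ∈ cube 0 m ∧ ε * z i = m := by
  rw [mem_rightFace_zero, signedSwap_mem_cube_iff, signedSwap_apply, Equiv.swap_apply_left]

lemma signedSwap_add_single_mem_rightFace_iff (hz : z ∈ cube 0 k)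
    (hy : z + Pi.single j (δ : ℤ) ∉ cube 0 k) :
    signedSwap i ε (z + Pi.single j (δ : ℤ)) ∈ rightFace 0 (k + 1) ↔ (i, ε) = (j, δ) := by
  have hj : δ * (z j + δ) = k + 1 := mul_coord_eq_of_add_single_notMem_cube hz hy
  rw [signedSwap_mem_rightFace_iff, and_iff_right (add_single_mem_cube hz), Prod.mk.injEq]
  push_cast
  rcases eq_or_ne i j with rfl | hij
  · have hne : z i + δ ≠ 0 := fun h => by rw [h] at hj; omega
    simp [← hj, hne, Units.ext_iff]
  · have hi := mem_cube_zero.1 hz i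
    have habs : |(ε : ℤ) * z i| = |z i| := by
      rw [abs_mul, Int.isUnit_iff_abs_eq.1 ε.isUnit, one_mul]
    simp only [Pi.add_apply, Pi.single_eq_of_ne hij, add_zero, hij, false_and, iff_false]
    grind

end SignedSwap

section FaceProbability

variable [NeZero d] {P : V d → Measure (ℕ → V d)} {z : V d} {k : ℕ}

lemma exitProb_cube_rightFace_le_update_zero (hP : ∀ z, IsSRWLaw (P z) z) {j : Fin d}
    (hz : j = 0 → z j ≤ 0) :
    exitProb P (cube 0 k) (rightFace 0 (k + 1)) z ≤
      exitProb P (cube 0 k) (rightFace 0 (k + 1)) (Function.update z j 0) := by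
  rcases eq_or_ne (z j) 0 with hj | hj
  · rw [← hj, Function.update_eq_self]
  · simpa using exitProb_reflect_le (z := Function.update z j 0) hP (finite_cube 0 k)
      disjoint_cube_rightFace (isPolarized_cube j (z j) k)
      (isPolarized_rightFace (fun h => (hz h).lt_of_ne hj) (k + 1)) (by simp)

lemma exitProb_cube_rightFace_le_zero (hP : ∀ z, IsSRWLaw (P z) z) (hz : z 0 ≤ 0) :
    exitProb P (cube 0 k) (rightFace 0 (k + 1)) z ≤
      exitProb P (cube 0 k) (rightFace 0 (k + 1)) 0 := by
  suffices h : ∀ s : Finset (Fin d), exitProb P (cube 0 k) (rightFace 0 (k + 1)) z ≤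
      exitProb P (cube 0 k) (rightFace 0 (k + 1)) (s.piecewise 0 z) by
    simpa using h Finset.univ
  intro s
  induction s using Finset.induction_on with
  | empty => simp
  | insert j s hj ih =>
    rw [Finset.piecewise_insert]
    exact ih.trans (exitProb_cube_rightFace_le_update_zero hP (by rintro rfl; simpa [hj] using hz))

lemma sum_exitProb_signedSwap_eqOn_one (hP : ∀ z, IsSRWLaw (P z) z) :
    Set.EqOn (fun z => ∑ s : Fin d × ℤˣ,
      exitProb P (cube 0 k) (rightFace 0 (k + 1)) (signedSwap s.1 s.2 z)) 1 (cube 0 k) := by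
  refine HarmonicOn.eqOn_of_eq_boundary (finite_cube 0 k) (harmonicOn_sum fun s _ => ?_)
    (harmonicOn_const 1 _) fun z hz y hzy hy => ?_
  · have hcomp := (harmonicOn_exitProb hP (disjoint_cube_rightFace (k := k))).comp
      (signedSwap s.1 s.2) fun _ _ => adj_signedSwap_iff
    rwa [preimage_signedSwap_cube] at hcomp
  · obtain ⟨j, δ, rfl⟩ := adj_iff_exists_single.1 hzy
    have hface : ∀ s : Fin d × ℤˣ, exitProb P (cube 0 k) (rightFace 0 (k + 1))
        (signedSwap s.1 s.2 (z + Pi.single j (δ : ℤ))) = if s = (j, δ) then 1 else 0 := fun s => by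
      rw [exitProb_of_notMem hP (mt signedSwap_mem_cube_iff.1 hy), Set.indicator_apply]
      exact if_congr (signedSwap_add_single_mem_rightFace_iff hz hy) rfl rfl
    simp [hface]

lemma exitProb_cube_rightFace_zero (hP : ∀ z, IsSRWLaw (P z) z) :
    exitProb P (cube 0 k) (rightFace 0 (k + 1)) 0 = 1 / (2 * (d : ℝ)) := by
  have hzero : (0 : V d) ∈ cube 0 k := mem_cube_zero.2 fun i => by simp
  have hsum := sum_exitProb_signedSwap_eqOn_one hP hzero
  have hfix : ∀ (i : Fin d) (ε : ℤˣ), signedSwap i ε 0 = 0 := fun i ε => by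
    ext l
    simp [signedSwap_apply]
  have hd : (d : ℝ) ≠ 0 := Nat.cast_ne_zero.2 (NeZero.ne d)
  simp only [hfix, Finset.sum_const, Finset.card_univ, Fintype.card_prod, Fintype.card_fin,
    Fintype.card_units_int, nsmul_eq_mul, Nat.cast_mul, Nat.cast_two, Pi.one_apply] at hsum
  rw [eq_div_iff (by positivity)]
  linear_combination hsum

end FaceProbability

/-- (Part of Lemma 3.4.)  Let `d ≥ 1`, `m ≥ 1`, and let
`h(z) = P^z( S(τ_{Q(0,m-1)}) ∈ R_m )` be the probability that simple random walk
started at `z` exits `Q(0,m-1)` through the right-hand face `R_m = {m} × [-m,m]^{d-1}`.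
Then `h(0) = 1/(2d)`, and `h(z) ≤ h(0)` for every
`z ∈ ([-m+1,0] × [-m+1,m-1]^{d-1}) ∩ ℤ^d`. -/
theorem exit_face_max_at_zero :
    ∀ d m : ℕ, 1 ≤ d → 1 ≤ m →
      (∀ μ : Measure (ℕ → V d), IsSRWLaw μ 0 →
        (μ { ω | ω (exitTime (cube 0 (m - 1)) ω) ∈ rightFace 0 m }).toReal
          = 1 / (2 * (d : ℝ))) ∧
      (∀ z : V d,
        (∀ i : Fin d, (i : ℕ) = 0 → -(m : ℤ) + 1 ≤ z i ∧ z i ≤ 0) →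
        (∀ i : Fin d, (i : ℕ) ≠ 0 → -(m : ℤ) + 1 ≤ z i ∧ z i ≤ (m : ℤ) - 1) →
        ∀ μz μ₀ : Measure (ℕ → V d), IsSRWLaw μz z → IsSRWLaw μ₀ 0 →
          (μz { ω | ω (exitTime (cube 0 (m - 1)) ω) ∈ rightFace 0 m }).toReal
            ≤ (μ₀ { ω | ω (exitTime (cube 0 (m - 1)) ω) ∈ rightFace 0 m }).toReal) := by
  intro d m hd hm
  obtain ⟨k, rfl⟩ := Nat.exists_eq_add_of_le' hm
  have : NeZero d := ⟨by omega⟩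
  refine ⟨fun μ hμ => ?_, fun z hz _ μz μ₀ hμz hμ₀ => ?_⟩
  · obtain ⟨P, hP⟩ := hμ.exists_family
    rw [hμ.unique (hP 0)]
    exact exitProb_cube_rightFace_zero hP
  · obtain ⟨P, hP⟩ := hμ₀.exists_family
    rw [hμ₀.unique (hP 0), hμz.unique (hP z)]
    exact exitProb_cube_rightFace_le_zero hP (hz 0 rfl).2

end USFPaper
end

section
/- (Boundary Harnack inequality) Let d ≥ 1. Let 𝒦 be an arbitrary nonempty subset of ([-m+1,0] × [-m+1,m-1]^{d-1}) ∩ Z^d. Then for all m ≥ 1 and all such 𝒦, P^0( S(τ_{Q(0,m-1)}) ∈ R_m | τ_{Q(0,m-1)} < T⁺_𝒦 ) ≥ 1/(2d). -/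
open MeasureTheory
open scoped ENNReal Classical

namespace USFPaper

variable {d : ℕ}

/-!
On leaving `Q = Q(0, m - 1)` at `x` the walk collects `f(x) = ∑_q (1{|x_q| ≥ m} - 2 · 1{x_1 ≥ m})`,
which is at least `1 - 2d · 1{x ∈ R_m}`. The mean of `f` is `0` from the origin and nonnegative
from every starting point with `x_1 ≤ 0`. Indeed, on the hyperplane `x_1 = 0` reflection replaces
`2 · 1{x_1 ≥ m}` by `1{|x_1| ≥ m}`, and exchanging the coordinates `1` and `q` up to signs shows
that `1{|x_q| ≥ m} - 1{|x_1| ≥ m}` has mean `0` from the points with `|x_1| = |x_q|`. A walk started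
with `x_1 ≤ 0`, respectively with `|x_1| ≤ |x_q|`, stays on that side until it either meets the
hyperplanes of cancellation or leaves `Q` with a nonnegative payoff. So stopping the walk on
`𝒦 ⊆ {x_1 ≤ 0}` discards a nonnegative mean, and what remains gives
`P(escape) - 2d · P(escape through R_m) ≤ 0`.
-/

open scoped BigOperators

/-! ### Steps and signed coordinate permutations -/

/-- The directions `±eᵢ` of the walk: a coordinate and a sign. -/
abbrev Step (d : ℕ) := Fin d × ℤˣ

/-- The lattice vector `±eᵢ` of a direction. -/
def stepVec (a : Step d) : V d := Pi.single a.1 (a.2 : ℤ)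

lemma stepVec_injective : Function.Injective (stepVec : Step d → V d) := by
  rintro ⟨i, ε⟩ ⟨j, δ⟩ h
  have hi : (ε : ℤ) = (Pi.single j (δ : ℤ) : V d) i := by
    simpa [stepVec] using congrFun h i
  obtain rfl : i = j := by
    by_contra hij
    simp [hij] at hi
  simpa [Units.ext_iff] using hi

lemma adj_add_stepVec (x : V d) (a : Step d) : adj x (x + stepVec a) := by
  have habs (i : Fin d) : |x i - (x + stepVec a) i| = (Pi.single a.1 1 : V d) i := by
    rcases eq_or_ne i a.1 with rfl | hi
    · simpa [stepVec] using Int.isUnit_iff_abs_eq.1 a.2.isUnit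
    · simp [stepVec, hi]
  rw [adj, Finset.sum_congr rfl fun i _ => habs i]
  simp

lemma add_stepVec_apply_nonpos {x : V d} {p : Fin d} (hx : x p < 0) (a : Step d) :
    (x + stepVec a) p ≤ 0 := by
  obtain ⟨i, ε⟩ := a
  simp only [stepVec, Pi.add_apply, Pi.single_apply]
  rcases Int.units_eq_one_or ε with rfl | rfl <;> split_ifs <;> simp <;> omega

lemma abs_add_stepVec_apply_le {x : V d} {p q : Fin d} (hx : |x p| < |x q|) (a : Step d) :
    |(x + stepVec a) p| ≤ |(x + stepVec a) q| := by
  have hpq : p ≠ q := by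
    rintro rfl
    exact hx.false
  obtain ⟨i, ε⟩ := a
  simp only [stepVec, Pi.add_apply, Pi.single_apply]
  rcases Int.units_eq_one_or ε with rfl | rfl <;> simp only [Units.val_one, Units.val_neg] <;>
    grind

/-- The signed coordinate permutation `x ↦ (εₖ x_{π k})ₖ`, an element of the hyperoctahedral
group acting on `ℤ^d`. -/
def signedPerm (ε : Fin d → ℤˣ) (π : Equiv.Perm (Fin d)) : V d →+ V d where
  toFun x k := ε k * x (π k)
  map_zero' := by ext; simp
  map_add' x y := by ext; simp [mul_add]

lemma signedPerm_apply (ε : Fin d → ℤˣ) (π : Equiv.Perm (Fin d)) (x : V d) (k : Fin d) :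
    signedPerm ε π x k = ε k * x (π k) := rfl

lemma abs_signedPerm_apply (ε : Fin d → ℤˣ) (π : Equiv.Perm (Fin d)) (x : V d) (k : Fin d) :
    |signedPerm ε π x k| = |x (π k)| := by
  rw [signedPerm_apply, abs_mul, Int.isUnit_iff_abs_eq.1 (ε k).isUnit, one_mul]

lemma signedPerm_stepVec (ε : Fin d → ℤˣ) (π : Equiv.Perm (Fin d)) (a : Step d) :
    signedPerm ε π (stepVec a) = stepVec (π.symm a.1, ε (π.symm a.1) * a.2) := by
  ext k
  rw [signedPerm_apply]
  rcases eq_or_ne k (π.symm a.1) with rfl | hk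
  · simp [stepVec]
  · have : π k ≠ a.1 := fun h => hk (π.eq_symm_apply.2 h)
    simp [stepVec, hk, this]

lemma exists_signedPerm_swap_eq_self {x : V d} {p q : Fin d} (hx : |x p| = |x q|) :
    ∃ ε, signedPerm ε (Equiv.swap p q) x = x := by
  have hsign (k : Fin d) : ∃ ε : ℤˣ, ε * x (Equiv.swap p q k) = x k := by
    have habs : |x k| = |x (Equiv.swap p q k)| := by
      rw [Equiv.swap_apply_def]
      split_ifs <;> simp_all
    rcases abs_eq_abs.1 habs with h | h
    · exact ⟨1, by simp [h]⟩
    · exact ⟨-1, by simp [h]⟩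
  choose ε hε using hsign
  exact ⟨ε, funext hε⟩

/-- Invariance of a set under all signed coordinate permutations. -/
def IsSignedPermInvariant (D : Set (V d)) : Prop :=
  ∀ ε π x, signedPerm ε π x ∈ D ↔ x ∈ D

lemma isSignedPermInvariant_cube (r : ℕ) : IsSignedPermInvariant (cube (0 : V d) r) := by
  intro ε π x
  simp only [cube, Set.mem_ofPred_eq, Pi.zero_apply, sub_zero, abs_signedPerm_apply]
  exact π.forall_congr_right (q := fun k => |x k| ≤ (r : ℤ))

/-! ### The averaging operator of the walk stopped on leaving a set -/

/-- The transition operator of simple random walk stopped on leaving `D`: it averages a function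
over the neighbours of the points of `D` and does not change its values off `D`. Its `n`-th
power sends `g` to `x ↦ E^x[g(S_{n ∧ τ_D})]`. -/
noncomputable def avgOn (D : Set (V d)) : Module.End ℝ (V d → ℝ) where
  toFun g x := if x ∈ D then 𝔼 a : Step d, g (x + stepVec a) else g x
  map_add' g h := by
    ext x
    by_cases hx : x ∈ D <;> simp [hx, Finset.expect_add_distrib]
  map_smul' c g := by
    ext x
    by_cases hx : x ∈ D <;> simp [hx, Finset.mul_expect]

section avgOn

variable {A D : Set (V d)} {f g : V d → ℝ} {x : V d}

lemma avgOn_apply_of_mem (hx : x ∈ D) : avgOn D g x = 𝔼 a : Step d, g (x + stepVec a) :=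
  if_pos hx

lemma avgOn_apply_of_notMem (hx : x ∉ D) : avgOn D g x = g x :=
  if_neg hx

lemma avgOn_pow_succ_apply_of_mem (hx : x ∈ D) (n : ℕ) :
    (avgOn D ^ (n + 1)) g x = 𝔼 a : Step d, (avgOn D ^ n) g (x + stepVec a) := by
  rw [pow_succ', Module.End.mul_apply, avgOn_apply_of_mem hx]

lemma avgOn_pow_apply_of_notMem (hx : x ∉ D) (n : ℕ) : (avgOn D ^ n) g x = g x := by
  induction n with
  | zero => rfl
  | succ n ih => rw [pow_succ', Module.End.mul_apply, avgOn_apply_of_notMem hx, ih]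

/-- Stopping earlier can only lower the mean, provided the value collected at each of the
additional stopping points is at most the mean still to be expected from there. -/
lemma avgOn_pow_le_avgOn_pow (hAD : A ⊆ D) (hgf : g ≤ f)
    (hg : ∀ n, ∀ x ∈ D \ A, g x ≤ (avgOn D ^ n) f x) (n : ℕ) (x : V d) :
    (avgOn A ^ n) g x ≤ (avgOn D ^ n) f x := by
  induction n generalizing x with
  | zero => exact hgf x
  | succ n ih =>
    by_cases hxA : x ∈ A
    · rw [avgOn_pow_succ_apply_of_mem hxA, avgOn_pow_succ_apply_of_mem (hAD hxA)]
      exact Finset.expect_le_expect fun a _ => ih _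
    · rw [avgOn_pow_apply_of_notMem hxA]
      by_cases hxD : x ∈ D
      · exact hg _ x ⟨hxD, hxA⟩
      · rw [avgOn_pow_apply_of_notMem hxD]
        exact hgf x

variable {ε : Fin d → ℤˣ} {π : Equiv.Perm (Fin d)}

lemma commute_avgOn_funLeft_signedPerm (hD : IsSignedPermInvariant D) :
    Commute (avgOn D) (LinearMap.funLeft ℝ ℝ (signedPerm ε π)) := by
  have hexp (g : V d → ℝ) (x : V d) :
      𝔼 a : Step d, g (signedPerm ε π x + signedPerm ε π (stepVec a)) =
        𝔼 a : Step d, g (signedPerm ε π x + stepVec a) := by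
    refine Fintype.expect_equiv
      (π.symm.prodShear fun i => Equiv.mulLeft (ε (π.symm i))) _ _ fun a => ?_
    rw [signedPerm_stepVec]
    rfl
  refine LinearMap.ext fun g => funext fun x => ?_
  simp only [Module.End.mul_apply, LinearMap.funLeft_apply]
  by_cases hx : x ∈ D
  · rw [avgOn_apply_of_mem hx, avgOn_apply_of_mem ((hD ε π x).2 hx)]
    simp only [LinearMap.funLeft_apply, map_add, hexp]
  · rw [avgOn_apply_of_notMem hx, avgOn_apply_of_notMem (mt (hD ε π x).1 hx)]
    rfl

lemma avgOn_pow_eq_zero_of_signedPerm_neg (hD : IsSignedPermInvariant D)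
    (hg : ∀ y, g (signedPerm ε π y) = -g y) (hx : signedPerm ε π x = x) (n : ℕ) :
    (avgOn D ^ n) g x = 0 := by
  have hneg : LinearMap.funLeft ℝ ℝ (signedPerm ε π) g = -g := funext hg
  have hcomm := LinearMap.congr_fun
    ((commute_avgOn_funLeft_signedPerm (ε := ε) (π := π) hD).pow_left n).eq g
  have hxn : -(avgOn D ^ n) g x = (avgOn D ^ n) g (signedPerm ε π x) := by
    simpa [hneg, LinearMap.funLeft_apply] using congrFun hcomm x
  rw [hx] at hxn
  linarith

end avgOn

/-! ### Comparison of the faces -/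

section Faces

variable {D : Set (V d)} {r : ℤ} {p q : Fin d} {x : V d}

/-- The payoff `1{|x_q| ≥ r} - 1{|x_p| ≥ r}`, which compares leaving through the two `q`-faces
with leaving through the two `p`-faces of a cube. -/
def absGap (r : ℤ) (p q : Fin d) (x : V d) : ℝ :=
  (if r ≤ |x q| then 1 else 0) - (if r ≤ |x p| then 1 else 0)

/-- The payoff `1{x_p ≤ -r} - 1{x_p ≥ r}`, which compares leaving through the left and right
`p`-faces of a cube. -/
def leftGap (r : ℤ) (p : Fin d) (x : V d) : ℝ :=
  (if x p ≤ -r then 1 else 0) - (if r ≤ x p then 1 else 0)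

/-- The payoff `1{|x_q| ≥ r} - 2 · 1{x_p ≥ r}`, which compares leaving through the two `q`-faces
with leaving through the right `p`-face of a cube. -/
def rightGap (r : ℤ) (p q : Fin d) (x : V d) : ℝ :=
  (if r ≤ |x q| then 1 else 0) - 2 * (if r ≤ x p then 1 else 0)

lemma rightGap_eq_absGap_add_leftGap (hr : 0 < r) (p q : Fin d) :
    rightGap r p q = absGap r p q + leftGap r p := by
  have hsplit (t : ℤ) : (if r ≤ |t| then 1 else 0 : ℝ) =
      (if r ≤ t then 1 else 0) + (if t ≤ -r then 1 else 0) := by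
    have := abs_cases t
    split_ifs <;> first | (exfalso; omega) | norm_num
  ext x
  simp only [rightGap, absGap, leftGap, Pi.add_apply, hsplit (x p)]
  ring

lemma avgOn_pow_absGap_eq_zero (hD : IsSignedPermInvariant D) (hx : |x p| = |x q|) (n : ℕ) :
    (avgOn D ^ n) (absGap r p q) x = 0 := by
  obtain ⟨ε, hε⟩ := exists_signedPerm_swap_eq_self hx
  exact avgOn_pow_eq_zero_of_signedPerm_neg hD
    (fun y => by simp [absGap, abs_signedPerm_apply]) hε n

lemma avgOn_pow_absGap_nonneg (hD : IsSignedPermInvariant D) (hx : |x p| ≤ |x q|) (n : ℕ) :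
    0 ≤ (avgOn D ^ n) (absGap r p q) x := by
  have hbase {y : V d} (hy : |y p| ≤ |y q|) : 0 ≤ absGap r p q y := by
    unfold absGap
    split_ifs <;> first | (exfalso; omega) | norm_num
  induction n generalizing x with
  | zero => exact hbase hx
  | succ n ih =>
    rcases hx.eq_or_lt with heq | hlt
    · exact (avgOn_pow_absGap_eq_zero hD heq _).ge
    · by_cases hxD : x ∈ D
      · rw [avgOn_pow_succ_apply_of_mem hxD]
        exact Finset.expect_nonneg fun a _ => ih (abs_add_stepVec_apply_le hlt a)
      · rw [avgOn_pow_apply_of_notMem hxD]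
        exact hbase hx

lemma avgOn_pow_leftGap_eq_zero (hD : IsSignedPermInvariant D) (hx : x p = 0) (n : ℕ) :
    (avgOn D ^ n) (leftGap r p) x = 0 := by
  refine avgOn_pow_eq_zero_of_signedPerm_neg (ε := Function.update 1 p (-1)) (π := 1)
    hD (fun y => ?_) ?_ n
  · have hflip : signedPerm (Function.update 1 p (-1)) 1 y p = -y p := by
      simp [signedPerm_apply]
    simp only [leftGap, hflip, neg_le_neg_iff, le_neg (a := r), neg_sub]
  · ext k
    rcases eq_or_ne k p with rfl | hk
    · simp [signedPerm_apply, hx]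
    · simp [signedPerm_apply, hk]

lemma avgOn_pow_rightGap_of_apply_eq_zero (hD : IsSignedPermInvariant D) (hr : 0 < r)
    (hx : x p = 0) (n : ℕ) :
    (avgOn D ^ n) (rightGap r p q) x = (avgOn D ^ n) (absGap r p q) x := by
  rw [rightGap_eq_absGap_add_leftGap hr, map_add, Pi.add_apply,
    avgOn_pow_leftGap_eq_zero hD hx, add_zero]

lemma avgOn_pow_rightGap_zero (hD : IsSignedPermInvariant D) (hr : 0 < r) (n : ℕ) :
    (avgOn D ^ n) (rightGap r p q) 0 = 0 := by
  rw [avgOn_pow_rightGap_of_apply_eq_zero hD hr rfl,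
    avgOn_pow_absGap_eq_zero hD (by simp)]

lemma avgOn_pow_rightGap_nonneg (hD : IsSignedPermInvariant D) (hr : 0 < r) (hx : x p ≤ 0)
    (n : ℕ) : 0 ≤ (avgOn D ^ n) (rightGap r p q) x := by
  have hbase {y : V d} (hy : y p ≤ 0) : 0 ≤ rightGap r p q y := by
    rw [rightGap, if_neg (by omega : ¬ r ≤ y p)]
    split_ifs <;> norm_num
  induction n generalizing x with
  | zero => exact hbase hx
  | succ n ih =>
    rcases hx.eq_or_lt with heq | hlt
    · rw [avgOn_pow_rightGap_of_apply_eq_zero hD hr heq]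
      exact avgOn_pow_absGap_nonneg hD (by simp [heq]) _
    · by_cases hxD : x ∈ D
      · rw [avgOn_pow_succ_apply_of_mem hxD]
        exact Finset.expect_nonneg fun a _ => ih (add_stepVec_apply_nonpos hlt a)
      · rw [avgOn_pow_apply_of_notMem hxD]
        exact hbase hx

end Faces

/-! ### Path counting -/

/-- The path that starts at `x` and takes the successive steps `s`, after which it stays put. -/
def stepPath : (n : ℕ) → V d → (Fin n → Step d) → ℕ → V d
  | 0, x, _, _ => x
  | _ + 1, x, _, 0 => x
  | n + 1, x, s, k + 1 => stepPath n (x + stepVec (s 0)) (Fin.tail s) k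

lemma stepPath_apply_zero (n : ℕ) (x : V d) (s : Fin n → Step d) : stepPath n x s 0 = x := by
  cases n <;> rfl

lemma adj_stepPath {n : ℕ} (x : V d) (s : Fin n → Step d) {i : ℕ} (hi : i < n) :
    adj (stepPath n x s i) (stepPath n x s (i + 1)) := by
  induction n generalizing x i with
  | zero => exact absurd hi i.not_lt_zero
  | succ n ih =>
    cases i with
    | zero => simpa only [stepPath, stepPath_apply_zero] using adj_add_stepVec x (s 0)
    | succ i => exact ih _ _ (Nat.lt_of_succ_lt_succ hi)

lemma eq_of_forall_stepPath_eq {n : ℕ} {x : V d} {s t : Fin n → Step d}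
    (h : ∀ i ≤ n, stepPath n x s i = stepPath n x t i) : s = t := by
  induction n generalizing x with
  | zero => exact Subsingleton.elim _ _
  | succ n ih =>
    have hhead : s 0 = t 0 := by
      have h1 := h 1 (by omega)
      simp only [stepPath, stepPath_apply_zero, add_right_inj] at h1
      exact stepVec_injective h1
    have htail : Fin.tail s = Fin.tail t := ih (x := x + stepVec (s 0)) fun i hi => by
      simpa only [stepPath, hhead] using h (i + 1) (by omega)
    rw [← Fin.cons_self_tail s, ← Fin.cons_self_tail t, hhead, htail]

lemma expect_stepPath_succ (F : (ℕ → V d) → ℝ) (n : ℕ) (x : V d) :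
    𝔼 s : Fin (n + 1) → Step d, F (stepPath (n + 1) x s ∘ Nat.succ) =
      𝔼 a : Step d, 𝔼 s : Fin n → Step d, F (stepPath n (x + stepVec a) s) := by
  rw [← Finset.expect_product', Finset.univ_product_univ]
  exact Fintype.expect_equiv (Fin.consEquiv fun _ => Step d).symm _ _ fun _ => rfl

section IsSRWLaw

variable {μ : Measure (ℕ → V d)} {x : V d}

/-- The event that the walk follows `stepPath n x s` up to time `n`. -/
def stepCylinder (n : ℕ) (x : V d) (s : Fin n → Step d) : Set (ℕ → V d) :=
  {ω | ∀ i ≤ n, ω i = stepPath n x s i}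

lemma measurableSet_stepCylinder (n : ℕ) (x : V d) (s : Fin n → Step d) :
    MeasurableSet (stepCylinder n x s) := by
  simp only [stepCylinder, Set.ofPred_forall]
  exact .iInter fun i => .iInter fun _ => measurable_pi_apply i (measurableSet_singleton _)

lemma pairwise_disjoint_stepCylinder (n : ℕ) (x : V d) :
    Pairwise (Function.onFun Disjoint (stepCylinder n x)) := fun _ _ hst =>
  Set.disjoint_left.2 fun _ hs ht => hst <|
    eq_of_forall_stepPath_eq fun i hi => (hs i hi).symm.trans (ht i hi)

lemma IsSRWLaw.measure_stepCylinder (hμ : IsSRWLaw μ x) (n : ℕ) (s : Fin n → Step d) :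
    μ (stepCylinder n x s) = (2 * (d : ℝ≥0∞))⁻¹ ^ n :=
  hμ.2 n _ (stepPath_apply_zero n x s) fun _ hi => adj_stepPath x s hi

lemma IsSRWLaw.measureReal_stepCylinder (hμ : IsSRWLaw μ x) (n : ℕ) (s : Fin n → Step d) :
    μ.real (stepCylinder n x s) = (Fintype.card (Fin n → Step d) : ℝ)⁻¹ := by
  simp [measureReal_def, hμ.measure_stepCylinder, mul_pow, mul_comm]

variable [NeZero d]

lemma IsSRWLaw.ae_exists_mem_stepCylinder (hμ : IsSRWLaw μ x) (n : ℕ) :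
    ∀ᵐ ω ∂μ, ∃ s, ω ∈ stepCylinder n x s := by
  have := hμ.1
  have hmeas : MeasurableSet (⋃ s, stepCylinder n x s) :=
    .iUnion (measurableSet_stepCylinder n x)
  have hone : μ.real (⋃ s, stepCylinder n x s) = 1 := by
    rw [measureReal_iUnion_fintype (pairwise_disjoint_stepCylinder n x)
      (measurableSet_stepCylinder n x)]
    simp only [hμ.measureReal_stepCylinder, Finset.sum_const, Finset.card_univ, nsmul_eq_mul]
    exact mul_inv_cancel₀ (Nat.cast_ne_zero.2 Fintype.card_ne_zero)
  have hmem := (mem_ae_iff_prob_eq_one hmeas).2 ((ENNReal.toReal_eq_one_iff _).1 hone)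
  filter_upwards [hmem] with ω hω
  exact Set.mem_iUnion.1 hω

lemma IsSRWLaw.measureReal_eq_expect (hμ : IsSRWLaw μ x) {n : ℕ} {B : Set (ℕ → V d)}
    (hB : ∀ ω ω' : ℕ → V d, (∀ i ≤ n, ω i = ω' i) → (ω ∈ B ↔ ω' ∈ B)) :
    μ.real B = 𝔼 s : Fin n → Step d, B.indicator 1 (stepPath n x s) := by
  have := hμ.1
  have hae : B =ᵐ[μ] ⋃ s ∈ Finset.univ.filter (stepPath n x · ∈ B), stepCylinder n x s := by
    refine Filter.eventuallyEq_set.2 ?_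
    filter_upwards [hμ.ae_exists_mem_stepCylinder n] with ω ⟨s, hs⟩
    simp only [Set.mem_iUnion, Finset.mem_filter_univ, exists_prop]
    refine ⟨fun hω => ⟨s, (hB _ _ hs).1 hω, hs⟩, ?_⟩
    rintro ⟨t, htB, ht⟩
    exact (hB _ _ ht).2 htB
  rw [measureReal_congr hae, measureReal_biUnion_finset
    ((pairwise_disjoint_stepCylinder n x).set_pairwise _)
    fun s _ => measurableSet_stepCylinder n x s]
  simp [hμ.measureReal_stepCylinder, Fintype.expect_eq_sum_div_card, Set.indicator_apply,
    div_eq_mul_inv]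

lemma IsSRWLaw.ae_apply_zero_eq (hμ : IsSRWLaw μ x) : ∀ᵐ ω ∂μ, ω 0 = x := by
  filter_upwards [hμ.ae_exists_mem_stepCylinder 0] with ω ⟨_, hs⟩
  exact hs 0 le_rfl

lemma IsSRWLaw.ae_adj (hμ : IsSRWLaw μ x) : ∀ᵐ ω ∂μ, ∀ n, adj (ω n) (ω (n + 1)) := by
  refine ae_all_iff.2 fun n => ?_
  filter_upwards [hμ.ae_exists_mem_stepCylinder (n + 1)] with ω ⟨s, hs⟩
  rw [hs n n.le_succ, hs (n + 1) le_rfl]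
  exact adj_stepPath x s n.lt_succ_self

end IsSRWLaw

/-! ### Reaching one set through another -/

/-- The event that the path reaches `R` by time `n`, having stayed in `A` until then. -/
def reachBy (A R : Set (V d)) (n : ℕ) : Set (ℕ → V d) :=
  {ω | ∃ j ≤ n, (∀ i < j, ω i ∈ A) ∧ ω j ∈ R}

section reachBy

variable {A R : Set (V d)} {n : ℕ} {ω ω' : ℕ → V d} {x : V d}

lemma monotone_reachBy (A R : Set (V d)) : Monotone (reachBy A R) :=
  fun _ _ hnk _ ⟨j, hj, h⟩ => ⟨j, hj.trans hnk, h⟩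

lemma mem_reachBy_congr (h : ∀ i ≤ n, ω i = ω' i) : ω ∈ reachBy A R n ↔ ω' ∈ reachBy A R n := by
  refine exists_congr fun j => and_congr_right fun hj => ?_
  rw [h j hj]
  exact and_congr_left' <| forall₂_congr fun i hi => by rw [h i (hi.le.trans hj)]

lemma measurableSet_reachBy (A R : Set (V d)) (n : ℕ) : MeasurableSet (reachBy A R n) := by
  have hcoord (i : ℕ) (B : Set (V d)) : MeasurableSet {ω : ℕ → V d | ω i ∈ B} :=
    measurable_pi_apply i .of_discrete
  simp only [reachBy, Set.ofPred_exists, Set.ofPred_and, Set.ofPred_forall]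
  exact .iUnion fun j => (MeasurableSet.const _).inter <|
    (MeasurableSet.iInter fun i => .iInter fun _ => hcoord i A).inter (hcoord j R)

lemma mem_reachBy_iff_of_notMem (h : ω 0 ∉ A) : ω ∈ reachBy A R n ↔ ω 0 ∈ R := by
  refine ⟨?_, fun hR => ⟨0, n.zero_le, by simp, hR⟩⟩
  rintro ⟨j, -, hA, hR⟩
  obtain rfl : j = 0 := by
    by_contra hj
    exact h (hA 0 (Nat.pos_of_ne_zero hj))
  exact hR

lemma mem_reachBy_succ_iff_of_mem (hA : ω 0 ∈ A) (hR : ω 0 ∉ R) :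
    ω ∈ reachBy A R (n + 1) ↔ ω ∘ Nat.succ ∈ reachBy A R n := by
  constructor
  · rintro ⟨_ | j, hj, hjA, hjR⟩
    · exact absurd hjR hR
    · exact ⟨j, Nat.le_of_succ_le_succ hj, (Nat.forall_lt_succ_left.1 hjA).2, hjR⟩
  · rintro ⟨j, hj, hjA, hjR⟩
    exact ⟨j + 1, Nat.succ_le_succ hj, Nat.forall_lt_succ_left.2 ⟨hA, hjA⟩, hjR⟩

variable [NeZero d]

lemma expect_indicator_reachBy_stepPath (hAR : Disjoint A R) (n : ℕ) (x : V d) :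
    𝔼 s : Fin n → Step d, (reachBy A R n).indicator (1 : (ℕ → V d) → ℝ) (stepPath n x s) =
      (avgOn A ^ n) (R.indicator 1) x := by
  induction n generalizing x with
  | zero => simp [reachBy, stepPath, Set.indicator_apply]
  | succ n ih =>
    by_cases hx : x ∈ A
    · have hxR : x ∉ R := Set.disjoint_left.1 hAR hx
      simp only [avgOn_pow_succ_apply_of_mem hx, ← ih]
      rw [← expect_stepPath_succ ((reachBy A R n).indicator 1)]
      refine Finset.expect_congr rfl fun s _ => ?_
      have hmem : stepPath (n + 1) x s ∈ reachBy A R (n + 1) ↔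
          stepPath (n + 1) x s ∘ Nat.succ ∈ reachBy A R n := mem_reachBy_succ_iff_of_mem hx hxR
      simp only [Set.indicator_apply, hmem]
      rfl
    · have hmem (s : Fin (n + 1) → Step d) : stepPath (n + 1) x s ∈ reachBy A R (n + 1) ↔ x ∈ R :=
        mem_reachBy_iff_of_notMem hx
      simp [avgOn_pow_apply_of_notMem hx, Set.indicator_apply, hmem]

variable {μ : Measure (ℕ → V d)}

lemma IsSRWLaw.measureReal_preimage_reachBy (hμ : IsSRWLaw μ x) (hAR : Disjoint A R) (n : ℕ) :
    μ.real ((· ∘ Nat.succ) ⁻¹' reachBy A R n) =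
      𝔼 a : Step d, (avgOn A ^ n) (R.indicator 1) (x + stepVec a) := by
  have hdet (ω ω' : ℕ → V d) (h : ∀ i ≤ n + 1, ω i = ω' i) :
      ω ∘ Nat.succ ∈ reachBy A R n ↔ ω' ∘ Nat.succ ∈ reachBy A R n :=
    mem_reachBy_congr fun i hi => h (i + 1) (Nat.succ_le_succ hi)
  rw [hμ.measureReal_eq_expect (B := (· ∘ Nat.succ) ⁻¹' reachBy A R n) hdet]
  simp only [← expect_indicator_reachBy_stepPath hAR]
  exact expect_stepPath_succ ((reachBy A R n).indicator 1) n x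

end reachBy

/-! ### The comparison at finite times -/

section Comparison

variable {K : Set (V d)} {r : ℕ} {p : Fin d}

lemma notMem_cube_of_lt {y : V d} (hy : r < y p) : y ∉ cube 0 r := fun h => by
  have := le_of_abs_le (h p)
  simp only [Pi.zero_apply] at this
  omega

lemma indicator_exit_sub_le_sum_rightGap (K : Set (V d)) (r : ℕ) (p : Fin d) :
    (cube 0 r ∪ K)ᶜ.indicator 1 - (2 * d : ℝ) • {y : V d | r < y p}.indicator 1 ≤
      ∑ q, rightGap (r + 1) p q := by
  intro y
  have hcount : (cube 0 r ∪ K)ᶜ.indicator (1 : V d → ℝ) y ≤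
      ∑ q, if (r : ℤ) + 1 ≤ |y q| then (1 : ℝ) else 0 := by
    refine Set.indicator_apply_le' (fun hy => ?_) fun _ =>
      Finset.sum_nonneg fun q _ => by positivity
    obtain ⟨q, hq⟩ : ∃ q, (r : ℤ) < |y q| := by
      simpa [cube] using fun h => hy (Or.inl h)
    exact (if_pos (Int.add_one_le_iff.2 hq)).ge.trans <|
      Finset.single_le_sum (f := fun q => if (r : ℤ) + 1 ≤ |y q| then (1 : ℝ) else 0)
        (fun q _ => by positivity) (Finset.mem_univ q)
  have hright : {y : V d | r < y p}.indicator (1 : V d → ℝ) y =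
      if (r : ℤ) + 1 ≤ y p then 1 else 0 := by
    simp [Set.indicator_apply]
  simp only [Pi.sub_apply, Pi.smul_apply, Finset.sum_apply, rightGap, Finset.sum_sub_distrib,
    Finset.sum_const, Finset.card_univ, Fintype.card_fin, nsmul_eq_mul, smul_eq_mul, hright]
  linarith

lemma avgOn_pow_sum_rightGap_nonneg {x : V d} (hx : x p ≤ 0) (n : ℕ) :
    0 ≤ (avgOn (cube 0 r) ^ n) (∑ q, rightGap (r + 1) p q) x := by
  rw [map_sum, Finset.sum_apply]
  exact Finset.sum_nonneg fun q _ =>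
    avgOn_pow_rightGap_nonneg (isSignedPermInvariant_cube r) (by positivity) hx n

lemma expect_avgOn_pow_sum_rightGap_eq_zero (r : ℕ) (p : Fin d) (n : ℕ) :
    𝔼 a : Step d, (avgOn (cube 0 r) ^ n) (∑ q, rightGap (r + 1) p q) (0 + stepVec a) = 0 := by
  rw [← avgOn_pow_succ_apply_of_mem (by simp [cube]), map_sum, Finset.sum_apply]
  exact Finset.sum_eq_zero fun q _ =>
    avgOn_pow_rightGap_zero (isSignedPermInvariant_cube r) (by positivity) _

lemma avgOn_pow_exit_sub_le (hK : ∀ z ∈ K, z p ≤ 0) (n : ℕ) (x : V d) :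
    (avgOn (cube 0 r \ K) ^ n)
        ((cube 0 r ∪ K)ᶜ.indicator 1 - (2 * d : ℝ) • {y : V d | r < y p}.indicator 1) x ≤
      (avgOn (cube 0 r) ^ n) (∑ q, rightGap (r + 1) p q) x := by
  refine avgOn_pow_le_avgOn_pow Set.sdiff_subset (indicator_exit_sub_le_sum_rightGap K r p)
    (fun k z hz => ?_) n x
  have hzK : z ∈ K := by simpa [hz.1] using hz.2
  refine le_trans ?_ (avgOn_pow_sum_rightGap_nonneg (hK z hzK) k)
  have hzU : (cube 0 r ∪ K)ᶜ.indicator (1 : V d → ℝ) z = 0 :=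
    Set.indicator_of_notMem (not_not_intro (Or.inr hzK)) _
  have hright : 0 ≤ {y : V d | r < y p}.indicator (1 : V d → ℝ) z :=
    Set.indicator_nonneg (fun _ _ => zero_le_one) z
  simp only [Pi.sub_apply, Pi.smul_apply, smul_eq_mul, hzU, zero_sub, Left.neg_nonpos_iff]
  positivity

variable [NeZero d] {μ : Measure (ℕ → V d)}

lemma IsSRWLaw.measureReal_reachBy_compl_le (hμ : IsSRWLaw μ 0) (hK : ∀ z ∈ K, z p ≤ 0) (n : ℕ) :
    μ.real ((· ∘ Nat.succ) ⁻¹' reachBy (cube 0 r \ K) (cube 0 r ∪ K)ᶜ n) ≤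
      2 * d * μ.real ((· ∘ Nat.succ) ⁻¹' reachBy (cube 0 r \ K) {y | r < y p} n) := by
  have hU : Disjoint (cube (0 : V d) r \ K) (cube 0 r ∪ K)ᶜ :=
    disjoint_compl_right.mono_left (Set.sdiff_subset.trans Set.subset_union_left)
  have hR : Disjoint (cube (0 : V d) r \ K) {y | r < y p} :=
    Set.disjoint_right.2 fun y hy hyA => notMem_cube_of_lt hy hyA.1
  rw [hμ.measureReal_preimage_reachBy hU, hμ.measureReal_preimage_reachBy hR, ← sub_nonpos,
    Finset.mul_expect, ← Finset.expect_sub_distrib, ← expect_avgOn_pow_sum_rightGap_eq_zero r p n]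
  refine Finset.expect_le_expect fun a _ => ?_
  simpa only [map_sub, map_smul, Pi.sub_apply, Pi.smul_apply, smul_eq_mul] using
    avgOn_pow_exit_sub_le hK n (0 + stepVec a)

end Comparison

/-! ### Exit and hitting times -/

section Times

variable {D K : Set (V d)} {ω : ℕ → V d} {j n : ℕ}

lemma exitTimeE_eq_natCast (hj : ω j ∉ D) (hlt : ∀ i < j, ω i ∈ D) : exitTimeE D ω = j := by
  have hex : ∃ j, ω j ∉ D := ⟨j, hj⟩
  rw [exitTimeE, dif_pos hex, (Nat.find_eq_iff hex).2 ⟨hj, fun i hi => not_not.2 (hlt i hi)⟩]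

lemma exitTime_eq (hj : ω j ∉ D) (hlt : ∀ i < j, ω i ∈ D) : exitTime D ω = j := by
  rw [exitTime, exitTimeE_eq_natCast hj hlt, ENat.toNat_natCast]

lemma exists_notMem_of_exitTimeE_ne_top (h : exitTimeE D ω ≠ ⊤) :
    ∃ j, ω j ∉ D ∧ ∀ i < j, ω i ∈ D := by
  have hex : ∃ j, ω j ∉ D := by
    by_contra hex
    exact h (dif_neg hex)
  exact ⟨Nat.find hex, Nat.find_spec hex, fun i hi => not_not.1 (Nat.find_min hex hi)⟩

lemma natCast_lt_hitTimePosE_iff : (j : ℕ∞) < hitTimePosE K ω ↔ ∀ i, 1 ≤ i → i ≤ j → ω i ∉ K := by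
  unfold hitTimePosE
  split_ifs with hex
  · rw [Nat.cast_lt, Nat.lt_find_iff]
    exact forall_congr' fun i => by tauto
  · simp only [ENat.natCast_lt_top, true_iff]
    exact fun i hi _ hK => hex ⟨i, hi, hK⟩

lemma exitTimeE_lt_hitTimePosE_iff :
    exitTimeE D ω < hitTimePosE K ω ↔
      (ω 0 ∈ D → ∃ n, ω ∘ Nat.succ ∈ reachBy (D \ K) (D ∪ K)ᶜ n) := by
  constructor
  · intro h h0
    obtain ⟨_ | j, hj, hlt⟩ := exists_notMem_of_exitTimeE_ne_top h.ne_top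
    · exact absurd h0 hj
    · rw [exitTimeE_eq_natCast hj hlt, natCast_lt_hitTimePosE_iff] at h
      refine ⟨j, j, le_rfl, fun i hi => ⟨hlt _ (by omega), h _ (by omega) (by omega)⟩, ?_⟩
      exact not_or_intro hj (h _ (by omega) le_rfl)
  · intro h
    by_cases h0 : ω 0 ∈ D
    · obtain ⟨n, j, -, hA, hU⟩ := h h0
      have hD : ω (j + 1) ∉ D := fun hD => hU (Or.inl hD)
      have hlt : ∀ i < j + 1, ω i ∈ D := Nat.forall_lt_succ_left.2 ⟨h0, fun i hi => (hA i hi).1⟩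
      rw [exitTimeE_eq_natCast hD hlt, natCast_lt_hitTimePosE_iff]
      rintro (_ | i) hi hij hK
      · exact absurd hi (by simp)
      · rcases (Nat.le_of_succ_le_succ hij).lt_or_eq with hij | rfl
        · exact (hA i hij).2 hK
        · exact hU (Or.inr hK)
    · rw [exitTimeE_eq_natCast h0 (by simp), natCast_lt_hitTimePosE_iff]
      omega

lemma measurableSet_exitTimeE_lt_hitTimePosE (D K : Set (V d)) :
    MeasurableSet {ω | exitTimeE D ω < hitTimePosE K ω} := by
  have hshift : Measurable fun ω : ℕ → V d => ω ∘ Nat.succ :=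
    measurable_pi_lambda _ fun i => measurable_pi_apply (i + 1)
  simp only [exitTimeE_lt_hitTimePosE_iff, imp_iff_not_or, Set.ofPred_or, Set.ofPred_exists]
  exact (measurable_pi_apply 0 (.of_discrete (s := Dᶜ))).union <|
    .iUnion fun n => hshift (measurableSet_reachBy _ _ n)

end Times

section Escape

variable [NeZero d] {K : Set (V d)} {r n : ℕ} {ω : ℕ → V d}

lemma mem_rightFace_of_adj {x y : V d} (hx : x ∈ cube 0 r) (hxy : adj x y) (hy : r < y 0) :
    y ∈ rightFace 0 (r + 1) := by
  have hcoord (i : Fin d) : |x i| ≤ r ∧ |x i - y i| ≤ 1 :=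
    ⟨by simpa using hx i, hxy ▸ Finset.single_le_sum (f := fun i => |x i - y i|)
      (fun _ _ => abs_nonneg _) (Finset.mem_univ i)⟩
  refine ⟨fun i => ?_, fun i hi => ?_⟩
  · have := hcoord i
    simp only [Pi.zero_apply, sub_zero, Nat.cast_add, Nat.cast_one]
    grind
  · obtain rfl : i = 0 := Fin.val_eq_zero_iff.1 hi
    have := hcoord 0
    simp only [Pi.zero_apply, zero_add, Nat.cast_add, Nat.cast_one]
    grind

lemma exitTimeE_lt_hitTimePosE_and_mem_rightFace (hK : ∀ z ∈ K, z 0 ≤ 0)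
    (h0 : ω 0 ∈ cube 0 r) (hadj : ∀ i, adj (ω i) (ω (i + 1)))
    (hω : ω ∘ Nat.succ ∈ reachBy (cube 0 r \ K) {y | r < y 0} n) :
    exitTimeE (cube 0 r) ω < hitTimePosE K ω ∧
      ω (exitTime (cube 0 r) ω) ∈ rightFace 0 (r + 1) := by
  obtain ⟨j, -, hA, hR : (r : ℤ) < ω (j + 1) 0⟩ := hω
  have hD : ω (j + 1) ∉ cube 0 r := notMem_cube_of_lt hR
  have hlt : ∀ i < j + 1, ω i ∈ cube 0 r :=
    Nat.forall_lt_succ_left.2 ⟨h0, fun i hi => (hA i hi).1⟩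
  have hjK : ω (j + 1) ∉ K := fun hjK => by
    have := hK _ hjK
    omega
  constructor
  · exact exitTimeE_lt_hitTimePosE_iff.2 fun _ => ⟨j, j, le_rfl, hA, not_or_intro hD hjK⟩
  · rw [exitTime_eq hD hlt]
    exact mem_rightFace_of_adj (hlt j j.lt_succ_self) (hadj j) hR

lemma exitTimeE_lt_hitTimePosE_of_eq_single (hK : ∀ z ∈ K, z 0 ≤ 0)
    (hω : ∀ i ≤ r + 1, ω i = Pi.single 0 (i : ℤ)) :
    exitTimeE (cube 0 r) ω < hitTimePosE K ω := by
  have hexit : ω (r + 1) ∉ cube 0 r := notMem_cube_of_lt (p := 0) <| by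
    simp [hω (r + 1) le_rfl]
  have hlt (i : ℕ) (hi : i < r + 1) : ω i ∈ cube 0 r := by
    rw [hω i hi.le]
    intro k
    rcases eq_or_ne k 0 with rfl | hk
    · simpa using Nat.le_of_lt_succ hi
    · simp [hk]
  rw [exitTimeE_eq_natCast hexit hlt, natCast_lt_hitTimePosE_iff]
  intro i hi hir hiK
  have := hK _ hiK
  simp only [hω i hir, Pi.single_eq_same] at this
  omega

variable {μ : Measure (ℕ → V d)}

lemma IsSRWLaw.measure_exitTimeE_lt_hitTimePosE_pos (hμ : IsSRWLaw μ 0)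
    (hK : ∀ z ∈ K, z 0 ≤ 0) (r : ℕ) :
    0 < μ {ω | exitTimeE (cube 0 r) ω < hitTimePosE K ω} := by
  have hadj (i : ℕ) : adj (Pi.single 0 (i : ℤ) : V d) (Pi.single 0 ((i + 1 : ℕ) : ℤ)) := by
    simpa [stepVec, ← Pi.single_add] using adj_add_stepVec (Pi.single 0 (i : ℤ)) ((0 : Fin d), 1)
  have hcyl := hμ.2 (r + 1) (fun i => Pi.single 0 (i : ℤ)) (by simp) fun i _ => hadj i
  calc 0 < (2 * (d : ℝ≥0∞))⁻¹ ^ (r + 1) :=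
        ENNReal.pow_pos (ENNReal.inv_pos.2 (ENNReal.mul_ne_top (by simp) (by simp))) _
    _ ≤ _ := hcyl ▸ measure_mono fun ω hω => exitTimeE_lt_hitTimePosE_of_eq_single hK hω

lemma IsSRWLaw.measureReal_exit_le_mul_rightFace (hμ : IsSRWLaw μ 0)
    (hK : ∀ z ∈ K, z 0 ≤ 0) (r : ℕ) :
    μ.real {ω | exitTimeE (cube 0 r) ω < hitTimePosE K ω} ≤
      2 * d * μ.real ({ω | exitTimeE (cube 0 r) ω < hitTimePosE K ω} ∩
        {ω | ω (exitTime (cube 0 r) ω) ∈ rightFace 0 (r + 1)}) := by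
  have := hμ.1
  have h0 : ∀ᵐ ω ∂μ, ω 0 ∈ cube 0 r := hμ.ae_apply_zero_eq.mono fun ω hω => by simp [hω, cube]
  have hunion : {ω | exitTimeE (cube 0 r) ω < hitTimePosE K ω} =ᵐ[μ]
      ⋃ n, (· ∘ Nat.succ) ⁻¹' reachBy (cube 0 r \ K) (cube 0 r ∪ K)ᶜ n := by
    refine Filter.eventuallyEq_set.2 (h0.mono fun ω hω => ?_)
    simp [exitTimeE_lt_hitTimePosE_iff, hω]
  have hmono : Monotone fun n =>
      (· ∘ Nat.succ) ⁻¹' reachBy (cube (0 : V d) r \ K) (cube 0 r ∪ K)ᶜ n :=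
    fun _ _ hnk => Set.preimage_mono (monotone_reachBy _ _ hnk)
  have hlim := (ENNReal.tendsto_toReal (measure_ne_top μ _)).comp
    (tendsto_measure_iUnion_atTop (μ := μ) hmono)
  rw [measureReal_congr hunion]
  refine le_of_tendsto' hlim fun n => (hμ.measureReal_reachBy_compl_le hK n).trans ?_
  gcongr ?_ * ?_
  refine ENNReal.toReal_mono (measure_ne_top _ _) (measure_mono_ae ?_)
  filter_upwards [h0, hμ.ae_adj] with ω hω hadj hreach
  exact exitTimeE_lt_hitTimePosE_and_mem_rightFace hK hω hadj hreach

end Escape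

theorem boundary_harnack_general {m : ℕ} (hd : 1 ≤ d) (hm : 1 ≤ m) {K : Set (V d)}
    (hK : ∀ z ∈ K, ∀ i : Fin d, (i : ℕ) = 0 → z i ≤ 0)
    {μ : Measure (ℕ → V d)} (hμ : IsSRWLaw μ 0) :
    1 / (2 * (d : ℝ)) ≤
      (ProbabilityTheory.cond μ
          { ω | exitTimeE (cube 0 (m - 1)) ω < hitTimePosE K ω }
          { ω | ω (exitTime (cube 0 (m - 1)) ω) ∈ rightFace 0 m }).toReal := by
  have := hμ.1
  have : NeZero d := ⟨by omega⟩
  obtain ⟨r, rfl⟩ := Nat.exists_eq_add_of_le' hm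
  have hK0 : ∀ z ∈ K, z 0 ≤ 0 := fun z hz => hK z hz 0 (Fin.val_zero d)
  have hpos := ENNReal.toReal_pos (hμ.measure_exitTimeE_lt_hitTimePosE_pos hK0 r).ne'
    (measure_ne_top _ _)
  have hle := hμ.measureReal_exit_le_mul_rightFace hK0 r
  have hd0 : (0 : ℝ) < 2 * d := by positivity
  rw [Nat.add_sub_cancel, ProbabilityTheory.cond_apply
    (measurableSet_exitTimeE_lt_hitTimePosE _ _), ENNReal.toReal_mul, ENNReal.toReal_inv,
    ← div_eq_inv_mul, div_le_div_iff₀ hd0 hpos, one_mul, mul_comm]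
  exact hle

/-- **Boundary Harnack inequality** (Lemma 3.4).  Let `d ≥ 1`.  For every `m ≥ 1` and
every nonempty `𝒦 ⊆ ([-m+1,0] × [-m+1,m-1]^{d-1}) ∩ ℤ^d`,
`P^0( S(τ_{Q(0,m-1)}) ∈ R_m | τ_{Q(0,m-1)} < T⁺_𝒦 ) ≥ 1/(2d)`. -/
theorem boundary_harnack :
    ∀ d m : ℕ, 1 ≤ d → 1 ≤ m →
    ∀ 𝒦 : Set (V d), 𝒦.Nonempty →
      (∀ z ∈ 𝒦,
        (∀ i : Fin d, (i : ℕ) = 0 → -(m : ℤ) + 1 ≤ z i ∧ z i ≤ 0) ∧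
        (∀ i : Fin d, (i : ℕ) ≠ 0 → -(m : ℤ) + 1 ≤ z i ∧ z i ≤ (m : ℤ) - 1)) →
    ∀ μ : Measure (ℕ → V d), IsSRWLaw μ 0 →
      1 / (2 * (d : ℝ)) ≤
        (ProbabilityTheory.cond μ
            { ω | exitTimeE (cube 0 (m - 1)) ω < hitTimePosE 𝒦 ω }
            { ω | ω (exitTime (cube 0 (m - 1)) ω) ∈ rightFace 0 m }).toReal := by
  intro d m hd hm K _ hK μ hμ
  exact boundary_harnack_general hd hm (fun z hz i hi => ((hK z hz).1 i hi).2) hμ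

end USFPaper
end
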